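/- arXiv:1103.5519 — 2 statements merged into one kernel-verified Lean document; each statement's English description precedes it below -/
import Mathlib

section
/- Let L be an odd unimodular lattice in dimension 44 having minimum norm 4. Then L has kissing number 6600 if and only if σ(L) = 20. -/
open scoped RealInnerProductSpace

noncomputable section

/-- The norm `(x, x)` of a vector `x ∈ ℝⁿ` (squared Euclidean length). -/
def normOf {n : ℕ} (x : EuclideanSpace ℝ (Fin n)) : ℝ := ⟪x, x⟫

/-- The dual `L* = {x ∈ ℝⁿ : (x,y) ∈ ℤ for all y ∈ L}` of a set of vectors. -/
def dualSet {n : ℕ} (L : Set (EuclideanSpace ℝ (Fin n))) : Set (EuclideanSpace ℝ (Fin n)) :=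
  {x | ∀ y ∈ L, ∃ m : ℤ, ⟪x, y⟫ = (m : ℝ)}

/-- `L` is a unimodular lattice: `L = L*`. -/
def IsUnimodularLattice {n : ℕ} (L : Set (EuclideanSpace ℝ (Fin n))) : Prop :=
  L = dualSet L

/-- `L` is odd: some vector of `L` has odd (integral) norm. -/
def IsOddLattice {n : ℕ} (L : Set (EuclideanSpace ℝ (Fin n))) : Prop :=
  ∃ x ∈ L, ∃ m : ℤ, Odd m ∧ normOf x = (m : ℝ)

/-- The even sublattice `L₀ = {x ∈ L : (x,x) even}`. -/
def evenSublattice {n : ℕ} (L : Set (EuclideanSpace ℝ (Fin n))) :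
    Set (EuclideanSpace ℝ (Fin n)) :=
  {x | x ∈ L ∧ ∃ m : ℤ, normOf x = 2 * (m : ℝ)}

/-- The shadow `S(L) = L₀* \ L`. -/
def shadow {n : ℕ} (L : Set (EuclideanSpace ℝ (Fin n))) : Set (EuclideanSpace ℝ (Fin n)) :=
  dualSet (evenSublattice L) \ L

/-- `L` has minimum norm `r`: `r` is the least norm among nonzero vectors of `L`. -/
def HasMinNorm {n : ℕ} (L : Set (EuclideanSpace ℝ (Fin n))) (r : ℝ) : Prop :=
  IsLeast {s : ℝ | ∃ x ∈ L, x ≠ 0 ∧ normOf x = s} r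

/-- The shadow `S(L)` has minimum norm `r`. -/
def HasShadowMinNorm {n : ℕ} (L : Set (EuclideanSpace ℝ (Fin n))) (r : ℝ) : Prop :=
  IsLeast {s : ℝ | ∃ x ∈ shadow L, normOf x = s} r

/-- `σ(L) = r`, i.e. `4 · min(S(L)) = r`. -/
def HasSigma {n : ℕ} (L : Set (EuclideanSpace ℝ (Fin n))) (r : ℝ) : Prop :=
  ∃ s : ℝ, HasShadowMinNorm L s ∧ r = 4 * s

/-- The number of vectors of norm `r` in `L`; when `L` has minimum norm `r`,
this is the kissing number of `L`. -/
def numVecsOfNorm {n : ℕ} (L : Set (EuclideanSpace ℝ (Fin n))) (r : ℝ) : ℕ :=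
  Set.ncard {x ∈ L | normOf x = r}

noncomputable section
open Complex MeasureTheory Filter Topology Asymptotics

/-- A holomorphic weight two form for the full modular group has zero mean on a low segment. -/
lemma wt2_base {G : ℂ → ℂ} (hd : ∀ z : ℂ, 0 < z.im → DifferentiableAt ℂ G z)
    (hS : ∀ z : ℂ, 0 < z.im → G (-1 / z) = z ^ 2 * G z) :
    ∫ x in (-1/2 : ℝ)..(1/2 : ℝ), G (x + (√3/2 : ℝ) * I) = 0 := by
  set B : Set ℂ := Metric.ball (2 * I) (√3) with hB
  have hs3 : (√3) ^ 2 = 3 := Real.sq_sqrt (by norm_num)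
  have hs3p : 0 < √3 := by positivity
  have memB : ∀ z : ℂ, z ∈ B ↔ z.re ^ 2 + z.im ^ 2 - 4 * z.im + 1 < 0 := by
    intro z
    rw [hB, mem_ball_iff_norm, ← sq_lt_sq₀ (norm_nonneg _) hs3p.le, hs3, ← Complex.normSq_eq_norm_sq,
      Complex.normSq_apply]
    simp
    constructor <;> intro h <;> nlinarith
  have imB : ∀ z ∈ B, 0 < z.im := by
    intro z hz
    rw [memB] at hz
    nlinarith [sq_nonneg z.re, sq_nonneg z.im]
  have hex : IsExactOn G B := by
    apply DifferentiableOn.isExactOn_ball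
    intro z hz
    exact (hd z (imB z hz)).differentiableWithinAt
  obtain ⟨Φ, hΦ⟩ := hex
  have hne : ∀ z ∈ B, z ≠ 0 := by
    intro z hz h
    have := imB z hz
    simp [h] at this
  have hinv : ∀ z ∈ B, -1 / z ∈ B := by
    intro z hz
    have hz0 := hne z hz
    have hn : 0 < normSq z := normSq_pos.mpr hz0
    rw [memB] at hz ⊢
    have e1 : (-1 / z).re = - z.re / normSq z := by simp [Complex.div_re]
    have e2 : (-1 / z).im = z.im / normSq z := by simp [Complex.div_im, neg_div]
    rw [e1, e2]
    have : (-z.re / normSq z) ^ 2 + (z.im / normSq z) ^ 2 - 4 * (z.im / normSq z) + 1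
        = (z.re ^ 2 + z.im ^ 2 - 4 * z.im + 1) / normSq z := by
      field_simp
      rw [normSq_apply]; ring
    rw [this]
    exact div_neg_of_neg_of_pos hz hn
  have hconst : ∀ z ∈ B, ∀ w ∈ B, Φ (-1 / z) - Φ z = Φ (-1 / w) - Φ w := by
    intro z hz w hw
    have hder : ∀ u ∈ B, HasDerivAt (fun u => Φ (-1 / u) - Φ u) 0 u := by
      intro u hu
      have h1 : HasDerivAt (fun u : ℂ => -1 / u) (1 / u ^ 2) u := by
        have h3 := (hasDerivAt_inv (hne u hu)).neg
        have h4 : (fun u : ℂ => -1 / u) = -fun u : ℂ => u⁻¹ := by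
          funext v; simp [neg_div]
        rw [h4]
        exact h3.congr_deriv (by simp)
      have h2 := ((hΦ _ (hinv u hu)).comp u h1).sub (hΦ u hu)
      refine h2.congr_deriv ?_
      rw [hS u (imB u hu)]
      have := hne u hu
      field_simp
      ring
    exact (convex_ball _ _).is_const_of_fderivWithin_eq_zero (𝕜 := ℂ) (f := fun u => Φ (-1 / u) - Φ u)
      (fun u hu => (hder u hu).differentiableAt.differentiableWithinAt)
      (fun u hu => by
        have := (hder u hu).hasFDerivAt.hasFDerivWithinAt (s := B)
        rw [this.fderivWithin (Metric.isOpen_ball.uniqueDiffWithinAt hu)]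
        ext; simp) hz hw
  have hIB : I ∈ B := by rw [memB]; norm_num
  have hSI : ∀ z ∈ B, Φ (-1 / z) = Φ z := by
    intro z hz
    have := hconst z hz I hIB
    have hI : -1 / I = I := by
      rw [div_eq_iff I_ne_zero, I_mul_I]
    rw [hI, sub_self] at this
    exact sub_eq_zero.mp this
  have hs32 : 1.7 < √3 := by
    rw [Real.lt_sqrt] <;> norm_num
  have hseg : ∀ x ∈ Set.uIcc (-1/2 : ℝ) (1/2), ((x : ℂ) + (√3/2 : ℝ) * I) ∈ B := by
    intro x hx
    rw [Set.uIcc_of_le (by norm_num)] at hx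
    rw [memB]
    simp
    nlinarith [hx.1, hx.2]
  have hinn := intervalIntegral.integral_eq_sub_of_hasDerivAt (a := (-1/2 : ℝ)) (b := 1/2)
    (f := fun x : ℝ => Φ (x + (√3/2 : ℝ) * I)) (f' := fun x : ℝ => G (x + (√3/2 : ℝ) * I)) ?_ ?_
  · rw [hinn]
    have hm := hseg (1/2) (by simp)
    have := hSI _ hm
    rw [sub_eq_zero, ← this]
    congr 1
    have hne' := hne _ hm
    rw [div_eq_iff hne']
    have : (√3 : ℂ) ^ 2 = 3 := by exact_mod_cast hs3
    push_cast
    ring_nf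
    rw [I_sq, this]; norm_num
  · intro x hx
    have h1 : HasDerivAt (fun z : ℂ => Φ (z + (√3/2 : ℝ) * I)) (G (x + (√3/2 : ℝ) * I)) (x : ℂ) := by
      have := (hΦ _ (hseg x hx)).comp (x : ℂ) ((hasDerivAt_id (x : ℂ)).add_const ((√3/2 : ℝ) * I))
      exact this.congr_deriv (by simp)
    exact h1.comp_ofReal
  · apply ContinuousOn.intervalIntegrable
    intro x hx
    have := (hd _ (imB _ (hseg x hx))).continuousAt
    apply ContinuousAt.continuousWithinAt
    exact ContinuousAt.comp (f := fun x : ℝ => (x : ℂ) + (√3/2 : ℝ) * I) this (by fun_prop)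

lemma wt2_mean {G : ℂ → ℂ} (hd : ∀ z : ℂ, 0 < z.im → DifferentiableAt ℂ G z)
    (hT : ∀ z : ℂ, 0 < z.im → G (z + 1) = G z)
    (hS : ∀ z : ℂ, 0 < z.im → G (-1 / z) = z ^ 2 * G z) {Y : ℝ} (hY : 1 ≤ Y) :
    ∫ x in (-1/2 : ℝ)..(1/2 : ℝ), G (x + Y * I) = 0 := by
  have h0 := wt2_base hd hS
  have hs3p : 0 < √3 := by positivity
  have hs31 : √3 ≤ 2 := by
    rw [Real.sqrt_le_left] <;> norm_num
  have hr := integral_boundary_rect_eq_zero_of_differentiableOn G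
    ((-1/2 : ℝ) + (√3/2 : ℝ) * I) ((1/2 : ℝ) + Y * I) ?_
  · have e : ∀ y ∈ Set.uIcc (√3/2) Y, G ((1/2 : ℝ) + y * I) = G ((-1/2 : ℝ) + y * I) := by
      intro y hy
      rw [Set.uIcc_of_le (by linarith)] at hy
      rw [← hT ((-1/2 : ℝ) + y * I)]
      · congr 1; push_cast; ring
      · simp; linarith [hy.1]
    simp only [add_re, ofReal_re, mul_re, I_re, mul_zero, ofReal_im, I_im, mul_one, sub_self,
      add_zero, add_im, mul_im, zero_add] at hr
    rw [h0, intervalIntegral.integral_congr e] at hr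
    simpa using hr
  · intro z hz
    apply (hd z _).differentiableWithinAt
    have := hz.2
    simp at this
    rw [Set.uIcc_of_le (by linarith)] at this
    linarith [this.1]
end

noncomputable section
open Complex MeasureTheory Filter Topology Asymptotics

/-- the nome `exp (π i τ)` -/
def nome (τ : ℂ) : ℂ := cexp (Real.pi * I * τ)

/-- the filter `Im τ → ∞` -/
def imInf : Filter ℂ := comap Complex.im atTop

/-- the polynomial with the given coefficients -/
def pol7 (a0 a1 a2 a3 a4 a5 a6 t : ℂ) : ℂ :=
  a0 + a1 * t + a2 * t ^ 2 + a3 * t ^ 3 + a4 * t ^ 4 + a5 * t ^ 5 + a6 * t ^ 6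

/-- `f` has the given expansion in powers of the nome up to sixth order -/
def Asy (f : ℂ → ℂ) (a0 a1 a2 a3 a4 a5 a6 : ℂ) : Prop :=
  (fun τ => f τ - pol7 a0 a1 a2 a3 a4 a5 a6 (nome τ)) =O[imInf] fun τ => nome τ ^ 7

lemma nome_ne (τ : ℂ) : nome τ ≠ 0 := exp_ne_zero _

lemma norm_nome (τ : ℂ) : ‖nome τ‖ = Real.exp (-Real.pi * τ.im) := by
  simp [nome, Complex.norm_exp]

lemma nome_add_one (τ : ℂ) : nome (τ + 1) = - nome τ := by
  rw [nome, mul_add, exp_add, mul_one, exp_pi_mul_I, nome]; ring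

lemma norm_nome_lt {τ : ℂ} (h : 0 < τ.im) : ‖nome τ‖ < 1 := by
  rw [norm_nome, Real.exp_lt_one_iff]
  nlinarith [Real.pi_pos]

lemma eventually_imInf {P : ℂ → Prop} {y : ℝ} (h : ∀ τ : ℂ, y ≤ τ.im → P τ) : ∀ᶠ τ in imInf, P τ := by
  have := (eventually_ge_atTop y).comap Complex.im
  exact this.mono h

lemma nome_tendsto : Tendsto nome imInf (𝓝 0) := by
  rw [tendsto_zero_iff_norm_tendsto_zero]
  simp_rw [norm_nome]
  apply Real.tendsto_exp_atBot.comp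
  have : Tendsto Complex.im imInf atTop := tendsto_comap
  exact this.const_mul_atTop_of_neg (by linarith [Real.pi_pos])

instance imInf_neBot : imInf.NeBot := by
  apply NeBot.comap_of_surj inferInstance
  intro y; exact ⟨y * I, by simp⟩

lemma isBigO_one_of_tendsto {f : ℂ → ℂ} {c : ℂ} (h : Tendsto f imInf (𝓝 c)) :
    f =O[imInf] (fun _ => (1 : ℂ)) := h.isBigO_one ℂ

lemma poly_bdd (p : ℂ → ℂ) (hp : Continuous p) :
    (fun τ => p (nome τ)) =O[imInf] (fun _ => (1 : ℂ)) :=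
  isBigO_one_of_tendsto ((hp.tendsto 0).comp nome_tendsto)

lemma poly_small (p : ℂ → ℂ) (hp : Continuous p) :
    (fun τ => nome τ ^ 7 * p (nome τ)) =O[imInf] (fun τ => nome τ ^ 7) := by
  simpa using (isBigO_refl (fun τ => nome τ ^ 7) imInf).mul (poly_bdd p hp)

lemma Asy.tendsto {f : ℂ → ℂ} {a0 a1 a2 a3 a4 a5 a6 : ℂ} (h : Asy f a0 a1 a2 a3 a4 a5 a6) :
    Tendsto f imInf (𝓝 a0) := by
  have h1 : Tendsto (fun τ => nome τ ^ 7) imInf (𝓝 0) := by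
    simpa using nome_tendsto.pow 7
  have h2 := IsBigO.trans_tendsto h h1
  have h3 : Tendsto (fun τ => pol7 a0 a1 a2 a3 a4 a5 a6 (nome τ)) imInf (𝓝 a0) := by
    have hc : Continuous (pol7 a0 a1 a2 a3 a4 a5 a6) := by unfold pol7; fun_prop
    have := (hc.tendsto 0).comp nome_tendsto
    rw [show pol7 a0 a1 a2 a3 a4 a5 a6 0 = a0 by simp [pol7]] at this
    exact this
  simpa using h2.add h3

lemma Asy.congr {f g : ℂ → ℂ} {a0 a1 a2 a3 a4 a5 a6 : ℂ} (h : Asy f a0 a1 a2 a3 a4 a5 a6)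
    (hfg : ∀ τ : ℂ, 1 ≤ τ.im → f τ = g τ) : Asy g a0 a1 a2 a3 a4 a5 a6 := by
  refine IsBigO.congr' h (eventually_imInf (y := 1) fun τ hτ => ?_) EventuallyEq.rfl
  simp only [hfg τ hτ]

lemma Asy.coeffs {f : ℂ → ℂ} {a0 a1 a2 a3 a4 a5 a6 b0 b1 b2 b3 b4 b5 b6 : ℂ}
    (h : Asy f a0 a1 a2 a3 a4 a5 a6)
    (h0 : a0 = b0) (h1 : a1 = b1) (h2 : a2 = b2) (h3 : a3 = b3) (h4 : a4 = b4) (h5 : a5 = b5)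
    (h6 : a6 = b6) : Asy f b0 b1 b2 b3 b4 b5 b6 := by
  subst_vars; exact h

lemma Asy.add {f g : ℂ → ℂ} {a0 a1 a2 a3 a4 a5 a6 b0 b1 b2 b3 b4 b5 b6 : ℂ}
    (h : Asy f a0 a1 a2 a3 a4 a5 a6) (h' : Asy g b0 b1 b2 b3 b4 b5 b6) :
    Asy (fun τ => f τ + g τ) (a0 + b0) (a1 + b1) (a2 + b2) (a3 + b3) (a4 + b4) (a5 + b5) (a6 + b6) := by
  refine (IsBigO.add h h').congr_left fun τ => ?_
  simp only [pol7]; ring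

lemma Asy.sub {f g : ℂ → ℂ} {a0 a1 a2 a3 a4 a5 a6 b0 b1 b2 b3 b4 b5 b6 : ℂ}
    (h : Asy f a0 a1 a2 a3 a4 a5 a6) (h' : Asy g b0 b1 b2 b3 b4 b5 b6) :
    Asy (fun τ => f τ - g τ) (a0 - b0) (a1 - b1) (a2 - b2) (a3 - b3) (a4 - b4) (a5 - b5) (a6 - b6) := by
  refine (IsBigO.sub h h').congr_left fun τ => ?_
  simp only [pol7]; ring

lemma Asy.mul {f g : ℂ → ℂ} {a0 a1 a2 a3 a4 a5 a6 b0 b1 b2 b3 b4 b5 b6 : ℂ}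
    (h : Asy f a0 a1 a2 a3 a4 a5 a6) (h' : Asy g b0 b1 b2 b3 b4 b5 b6) :
    Asy (fun τ => f τ * g τ) (a0 * b0) (a0 * b1 + a1 * b0) (a0 * b2 + a1 * b1 + a2 * b0)
      (a0 * b3 + a1 * b2 + a2 * b1 + a3 * b0)
      (a0 * b4 + a1 * b3 + a2 * b2 + a3 * b1 + a4 * b0)
      (a0 * b5 + a1 * b4 + a2 * b3 + a3 * b2 + a4 * b1 + a5 * b0)
      (a0 * b6 + a1 * b5 + a2 * b4 + a3 * b3 + a4 * b2 + a5 * b1 + a6 * b0) := by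
  have e1 := IsBigO.mul h (isBigO_one_of_tendsto h'.tendsto)
  have hc : Continuous (pol7 a0 a1 a2 a3 a4 a5 a6) := by unfold pol7; fun_prop
  have e2 := IsBigO.mul (poly_bdd _ hc) h'
  have e3 := poly_small (fun t => (a1 * b6 + a2 * b5 + a3 * b4 + a4 * b3 + a5 * b2 + a6 * b1)
    + (a2 * b6 + a3 * b5 + a4 * b4 + a5 * b3 + a6 * b2) * t
    + (a3 * b6 + a4 * b5 + a5 * b4 + a6 * b3) * t ^ 2
    + (a4 * b6 + a5 * b5 + a6 * b4) * t ^ 3 + (a5 * b6 + a6 * b5) * t ^ 4 + a6 * b6 * t ^ 5)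
    (by fun_prop)
  simp only [mul_one, one_mul] at e1 e2
  refine ((e1.add e2).add e3).congr_left fun τ => ?_
  simp only [pol7]; ring

lemma Asy.shift {f : ℂ → ℂ} {a0 a1 a2 a3 a4 a5 a6 : ℂ} (h : Asy f a0 a1 a2 a3 a4 a5 a6) :
    Asy (fun τ => f (τ + 1)) a0 (-a1) a2 (-a3) a4 (-a5) a6 := by
  have ht : Tendsto (fun τ : ℂ => τ + 1) imInf imInf := by
    rw [imInf, tendsto_comap_iff]
    have : Complex.im ∘ (fun τ : ℂ => τ + 1) = Complex.im := by ext; simp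
    rw [this]; exact tendsto_comap
  have h1 := IsBigO.comp_tendsto h ht
  refine (h1.congr (fun τ => ?_) (fun τ => ?_)).trans
    (g := fun τ => -(nome τ ^ 7)) (isBigO_refl _ _).neg_left
  · simp only [Function.comp, nome_add_one, pol7]; ring
  · simp only [Function.comp, nome_add_one]; ring

lemma Asy.inv {f g : ℂ → ℂ} {a1 a2 a3 a4 a5 a6 b0 b1 b2 b3 b4 b5 b6 : ℂ}
    (h : Asy f 1 a1 a2 a3 a4 a5 a6) (hg : g = fun τ => pol7 b0 b1 b2 b3 b4 b5 b6 (nome τ))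
    (h' : Asy (fun τ => f τ * g τ) 1 0 0 0 0 0 0) (hn : ∀ τ : ℂ, 1 ≤ τ.im → f τ ≠ 0) :
    Asy (fun τ => (f τ)⁻¹) b0 b1 b2 b3 b4 b5 b6 := by
  have h2 : Tendsto (fun τ => (f τ)⁻¹) imInf (𝓝 1) := by
    simpa using h.tendsto.inv₀ one_ne_zero
  have h3 := (IsBigO.mul (isBigO_one_of_tendsto h2) h').neg_left
  simp only [one_mul] at h3
  refine IsBigO.congr' h3 (eventually_imInf (y := 1) fun τ hτ => ?_) EventuallyEq.rfl
  have := hn τ hτ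
  simp only [hg]
  rw [show pol7 1 0 0 0 0 0 0 (nome τ) = 1 by simp [pol7]]
  field_simp
  ring

lemma Asy.poly (b0 b1 b2 b3 b4 b5 b6 : ℂ) :
    Asy (fun τ => pol7 b0 b1 b2 b3 b4 b5 b6 (nome τ)) b0 b1 b2 b3 b4 b5 b6 := by
  simp only [Asy, sub_self]; exact isBigO_zero _ _

/-- expansion of a generating function -/
lemma Asy.of_count {ι : Type*} (ν : ι → ℕ) (hs : Summable fun x => Real.exp (-Real.pi * ν x)) :
    Asy (fun τ => ∑' x, nome τ ^ ν x) (Set.ncard {x | ν x = 0}) (Set.ncard {x | ν x = 1})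
      (Set.ncard {x | ν x = 2}) (Set.ncard {x | ν x = 3}) (Set.ncard {x | ν x = 4})
      (Set.ncard {x | ν x = 5}) (Set.ncard {x | ν x = 6}) := by
  classical
  have hfin : {x | ν x < 7}.Finite := by
    have h1 := hs.tendsto_cofinite_zero.eventually (gt_mem_nhds (Real.exp_pos (-Real.pi * 7)))
    refine h1.subset fun x hx => ?_
    simp only [Set.mem_ofPred_eq, Set.mem_compl_iff, not_lt] at hx ⊢
    apply Real.exp_le_exp.mpr
    have : (ν x : ℝ) ≤ 7 := by exact_mod_cast hx.le
    nlinarith [Real.pi_pos]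
  set F := hfin.toFinset with hF
  set M := ∑' x, Real.exp (-Real.pi * ν x) with hM
  refine IsBigO.of_bound (Real.exp (Real.pi * 7) * M) (eventually_imInf (y := 1) fun τ hτ => ?_)
  have hle : ∀ k : ℕ, ‖nome τ ^ k‖ ≤ Real.exp (-Real.pi * k) := by
    intro k
    rw [norm_pow, norm_nome, ← Real.exp_nat_mul]
    apply Real.exp_le_exp.mpr
    have : (0 : ℝ) ≤ k := by positivity
    nlinarith [mul_nonneg this Real.pi_pos.le]
  have hsum : Summable fun x => nome τ ^ ν x := Summable.of_norm_bounded hs fun x => hle _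
  have hcard : ∀ k < 7, Set.ncard {x | ν x = k} = (F.filter fun x => ν x = k).card := by
    intro k hk
    rw [← Set.ncard_coe_finset]
    congr 1
    ext x
    simp [hF]; omega
  have hmain : ∑ x ∈ F, nome τ ^ ν x = pol7 (Set.ncard {x | ν x = 0}) (Set.ncard {x | ν x = 1})
      (Set.ncard {x | ν x = 2}) (Set.ncard {x | ν x = 3}) (Set.ncard {x | ν x = 4})
      (Set.ncard {x | ν x = 5}) (Set.ncard {x | ν x = 6}) (nome τ) := by
    rw [← Finset.sum_fiberwise_of_maps_to (t := Finset.range 7) (g := ν)]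
    · have : ∀ k ∈ Finset.range 7, ∑ x ∈ F with ν x = k, nome τ ^ ν x
          = (Set.ncard {x | ν x = k} : ℂ) * nome τ ^ k := by
        intro k hk
        rw [hcard k (Finset.mem_range.mp hk), Finset.sum_congr rfl (g := fun _ => nome τ ^ k)]
        · simp
        · intro x hx
          rw [(Finset.mem_filter.mp hx).2]
      rw [Finset.sum_congr rfl this]
      simp [Finset.sum_range_succ, pol7]
    · intro x hx
      simpa [hF] using hx
  beta_reduce
  rw [← hsum.sum_add_tsum_compl (s := F), hmain, add_sub_cancel_left]
  have hM' : Summable fun x : ↥(F : Set ι)ᶜ => Real.exp (-Real.pi * ν x) := hs.subtype _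
  calc ‖∑' x : ↥(F : Set ι)ᶜ, nome τ ^ ν x‖
      ≤ ∑' x : ↥(F : Set ι)ᶜ, (Real.exp (Real.pi * 7) * ‖nome τ ^ 7‖) * Real.exp (-Real.pi * ν x) := by
        refine tsum_of_norm_bounded (hM'.mul_left _).hasSum fun x => ?_
        have hx : 7 ≤ ν x := by
          have := x.2
          simpa [hF] using this
        obtain ⟨j, hj⟩ := Nat.exists_eq_add_of_le hx
        rw [hj, pow_add, norm_mul]
        have h1 := hle j
        have h2 : Real.exp (-Real.pi * j) = Real.exp (Real.pi * 7) * Real.exp (-Real.pi * ((7 + j : ℕ) : ℝ)) := by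
          rw [← Real.exp_add]; congr 1; push_cast; ring
        calc _ ≤ ‖nome τ ^ 7‖ * Real.exp (-Real.pi * j) := by gcongr
          _ = _ := by rw [h2]; ring
    _ = (Real.exp (Real.pi * 7) * ‖nome τ ^ 7‖) * ∑' x : ↥(F : Set ι)ᶜ, Real.exp (-Real.pi * ν x) :=
        tsum_mul_left
    _ ≤ (Real.exp (Real.pi * 7) * ‖nome τ ^ 7‖) * M := by
        gcongr
        exact Summable.tsum_subtype_le (fun x => Real.exp (-Real.pi * ν x)) _
          (fun x => (Real.exp_pos _).le) hs
    _ = _ := by ring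

lemma nome_zpow_integral (m : ℤ) (Y : ℝ) :
    ∫ x in (-1/2:ℝ)..(3/2:ℝ), nome (x + Y * I) ^ m = if m = 0 then 2 else 0 := by
  split_ifs with h
  · subst h; simp; norm_num
  · have e : ∀ x : ℝ, nome (x + Y * I) ^ m
        = nome (Y * I) ^ m * cexp ((m * (Real.pi * I)) * x) := by
      intro x
      simp only [nome, ← exp_int_mul, ← exp_add]
      congr 1; ring
    simp_rw [e]
    rw [intervalIntegral.integral_const_mul, integral_exp_mul_complex]
    · have : cexp (m * (Real.pi * I) * ((3/2 : ℝ) : ℂ)) = cexp (m * (Real.pi * I) * ((-1/2 : ℝ):ℂ)) := by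
        rw [Complex.exp_eq_exp_iff_exists_int]
        refine ⟨m, ?_⟩
        push_cast; ring
      rw [this]; simp
    · simp [h, Real.pi_ne_zero]

lemma const_term {G : ℂ → ℂ} (hd : ∀ z, 0 < z.im → DifferentiableAt ℂ G z)
    (hT : ∀ z, 0 < z.im → G (z+1) = G z) (hS : ∀ z, 0 < z.im → G (-1/z) = z^2 * G z)
    (k : Fin 7) {a0 a1 a2 a3 a4 a5 a6 : ℂ}
    (h : Asy (fun τ => nome τ ^ (k : ℕ) * G τ) a0 a1 a2 a3 a4 a5 a6) :
    ![a0, a1, a2, a3, a4, a5, a6] k = 0 := by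
  set a : Fin 7 → ℂ := ![a0, a1, a2, a3, a4, a5, a6] with ha
  obtain ⟨C, hC⟩ := h.bound
  obtain ⟨y0, hy0⟩ : ∃ y0 : ℝ, ∀ τ : ℂ, y0 ≤ τ.im →
      ‖nome τ ^ (k : ℕ) * G τ - pol7 a0 a1 a2 a3 a4 a5 a6 (nome τ)‖ ≤ C * ‖nome τ ^ 7‖ := by
    rw [imInf, eventually_comap] at hC
    obtain ⟨y0, hy0⟩ := eventually_atTop.mp hC
    exact ⟨y0, fun τ hτ => hy0 τ.im hτ τ rfl⟩
  have key : ∀ Y : ℝ, max y0 1 ≤ Y → ‖2 * a k‖ ≤ (|C| * Real.exp (-Real.pi * Y)) * 2 := by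
    intro Y hY
    have hY1 : 1 ≤ Y := (le_max_right _ _).trans hY
    have hY0 : y0 ≤ Y := (le_max_left _ _).trans hY
    have him : ∀ x : ℝ, ((x : ℂ) + Y * I).im = Y := by intro x; simp
    have hGc : Continuous fun x : ℝ => G (x + Y * I) := by
      rw [continuous_iff_continuousAt]
      intro x
      have h1 : ContinuousAt G ((x : ℂ) + Y * I) := (hd _ (by rw [him]; linarith)).continuousAt
      exact ContinuousAt.comp (f := fun x : ℝ => (x : ℂ) + Y * I) h1 (by fun_prop)
    have hnc : ∀ m : ℤ, Continuous fun x : ℝ => nome (x + Y * I) ^ m := by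
      intro m
      refine Continuous.zpow₀ (by unfold nome; fun_prop) m fun x => Or.inl (nome_ne _)
    have hG0 : ∫ x in (-1/2:ℝ)..(3/2:ℝ), G (x + Y * I) = 0 := by
      rw [← intervalIntegral.integral_add_adjacent_intervals (b := 1/2)
        (hGc.intervalIntegrable _ _) (hGc.intervalIntegrable _ _), wt2_mean hd hT hS hY1]
      have : ∫ x in (1/2:ℝ)..(3/2:ℝ), G (x + Y * I) = ∫ x in (-1/2:ℝ)..(1/2:ℝ), G ((x + 1 : ℝ) + Y * I) := by
        rw [intervalIntegral.integral_comp_add_right (fun x : ℝ => G (x + Y * I)) 1]; norm_num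
      rw [this, zero_add, ← wt2_mean hd hT hS hY1]
      congr 1; ext x
      rw [← hT (x + Y * I) (by rw [him]; linarith)]
      congr 1; push_cast; ring
    have hP : ∫ x in (-1/2:ℝ)..(3/2:ℝ), ∑ j : Fin 7, a j * nome (x + Y * I) ^ ((j : ℤ) - (k : ℤ)) = 2 * a k := by
      rw [intervalIntegral.integral_finsetSum fun j _ =>
        ((hnc _).const_mul (a j) |>.intervalIntegrable _ _)]
      simp_rw [intervalIntegral.integral_const_mul, nome_zpow_integral]
      rw [Finset.sum_eq_single k]
      · simp; ring
      · intro j _ hj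
        rw [if_neg, mul_zero]
        intro h0
        apply hj
        ext; omega
      · simp
    have hPc : Continuous fun x : ℝ => ∑ j : Fin 7, a j * nome (x + Y * I) ^ ((j : ℤ) - (k : ℤ)) :=
      continuous_finsetSum _ fun j _ => (hnc _).const_mul (a j)
    have hE : ‖∫ x in (-1/2:ℝ)..(3/2:ℝ), (G (x + Y * I) -
        ∑ j : Fin 7, a j * nome (x + Y * I) ^ ((j : ℤ) - (k : ℤ)))‖
        ≤ (|C| * Real.exp (-Real.pi * Y)) * |(3/2:ℝ) - (-1/2)| := by
      apply intervalIntegral.norm_integral_le_of_norm_le_const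
      intro x _
      set t := nome (x + Y * I) with ht
      have htn : ‖t‖ = Real.exp (-Real.pi * Y) := by rw [ht, norm_nome, him]
      have ht0 : t ≠ 0 := nome_ne _
      have htl : ‖t‖ ≤ 1 := (norm_nome_lt (by rw [him]; linarith)).le
      have h1 := hy0 (x + Y * I) (by rw [him]; exact hY0)
      rw [← ht] at h1
      have e1 : ∑ j : Fin 7, a j * t ^ ((j : ℤ) - (k : ℤ)) = (pol7 a0 a1 a2 a3 a4 a5 a6 t) / t ^ (k : ℕ) := by
        simp_rw [zpow_sub₀ ht0, zpow_natCast, ← mul_div_assoc, ← Finset.sum_div]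
        congr 1
        simp [Fin.sum_univ_seven, ha, pol7]
      have e2 : G (x + Y * I) - ∑ j : Fin 7, a j * t ^ ((j : ℤ) - (k : ℤ))
          = (t ^ (k : ℕ) * G (x + Y * I) - pol7 a0 a1 a2 a3 a4 a5 a6 t) / t ^ (k : ℕ) := by
        rw [e1]; field_simp
      rw [e2, norm_div, div_le_iff₀ (norm_pos_iff.mpr (pow_ne_zero _ ht0))]
      refine h1.trans ?_
      have e3 : ‖t ^ 7‖ = ‖t‖ ^ (6 - (k:ℕ)) * (‖t‖ * ‖t ^ (k : ℕ)‖) := by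
        rw [norm_pow, norm_pow, ← pow_succ', ← pow_add]; congr 1; omega
      rw [e3, ← htn]
      have h4 : ‖t‖ ^ (6 - (k:ℕ)) ≤ 1 := pow_le_one₀ (norm_nonneg _) htl
      calc C * (‖t‖ ^ (6 - (k:ℕ)) * (‖t‖ * ‖t ^ (k : ℕ)‖))
          ≤ |C| * (1 * (‖t‖ * ‖t ^ (k : ℕ)‖)) := by gcongr; exact le_abs_self C
        _ = _ := by ring
    rw [intervalIntegral.integral_sub (hGc.intervalIntegrable _ _) (hPc.intervalIntegrable _ _),
      hG0, hP, zero_sub, norm_neg] at hE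
    norm_num at hE ⊢
    exact hE
  have hlim : Tendsto (fun Y : ℝ => (|C| * Real.exp (-Real.pi * Y)) * 2) atTop (𝓝 0) := by
    have : Tendsto (fun Y : ℝ => Real.exp (-Real.pi * Y)) atTop (𝓝 0) := by
      apply Real.tendsto_exp_atBot.comp
      exact tendsto_id.const_mul_atTop_of_neg (by linarith [Real.pi_pos])
    simpa using (this.const_mul |C|).mul_const 2
  have h0 : ‖2 * a k‖ ≤ 0 := ge_of_tendsto hlim ((eventually_ge_atTop _).mono key)
  have := norm_le_zero_iff.mp h0
  simpa using this
end

noncomputable section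
open Complex MeasureTheory Filter Topology Asymptotics

/-- Euler product in the nome -/
def eulerP (τ : ℂ) : ℂ := ∏' n : ℕ, (1 - (nome τ ^ 2) ^ (n + 1))

/-- the discriminant form -/
def Dl (τ : ℂ) : ℂ := ModularForm.eta τ ^ 24

lemma nome_sq (τ : ℂ) : nome τ ^ 2 = cexp (2 * Real.pi * I * τ) := by
  rw [nome, ← exp_nat_mul]; congr 1; push_cast; ring

lemma Dl_eq (τ : ℂ) : Dl τ = nome τ ^ 2 * eulerP τ ^ 24 := by
  rw [Dl, ModularForm.eta, mul_pow, eulerP, nome_sq]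
  have h1 : Function.Periodic.qParam 24 τ ^ 24 = cexp (2 * Real.pi * I * τ) := by
    rw [Function.Periodic.qParam, ← exp_nat_mul]; congr 1; push_cast; ring
  have h2 : ∀ n : ℕ, ModularForm.eta_q n τ = cexp (2 * Real.pi * I * τ) ^ (n + 1) :=
    fun n => ModularForm.eta_q_eq_pow n τ
  rw [h1]
  simp only [h2]

lemma Dl_ne {τ : ℂ} (h : 0 < τ.im) : Dl τ ≠ 0 := pow_ne_zero _ (ModularForm.eta_ne_zero h)

lemma eulerP_ne {τ : ℂ} (h : 0 < τ.im) : eulerP τ ≠ 0 := by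
  intro h0
  apply Dl_ne h
  rw [Dl_eq, h0]; simp

lemma Dl_diff {τ : ℂ} (h : 0 < τ.im) : DifferentiableAt ℂ Dl τ :=
  (ModularForm.differentiableAt_eta_of_mem_upperHalfPlaneSet h).pow 24

lemma Dl_T (τ : ℂ) : Dl (τ + 1) = Dl τ := by
  simp only [Dl_eq, eulerP, nome_add_one, neg_sq]

lemma cs24 {z : ℂ} (hz : z ≠ 0) : Complex.sqrt z ^ 24 = z ^ 12 := by
  rw [sqrt_eq_exp hz, ← exp_nat_mul]
  ring_nf
  rw [show (log z * 12) = (12 : ℕ) * log z by push_cast; ring, exp_nat_mul, exp_log hz]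

lemma Dl_S {τ : ℂ} (h : 0 < τ.im) : Dl (-1 / τ) = τ ^ 12 * Dl τ := by
  have h1 := ModularForm.eta_comp_eq_csqrt_I_inv (show τ ∈ UpperHalfPlane.upperHalfPlaneSet from h)
  have hne : τ ≠ 0 := by rintro rfl; simp at h
  simp only [Function.comp, Pi.smul_apply, Pi.mul_apply, smul_eq_mul] at h1
  rw [Dl, h1, mul_pow, mul_pow, inv_pow, cs24 I_ne_zero, cs24 hne, Dl]
  rw [show I ^ 12 = 1 by rw [show 12 = 4 * 3 by norm_num, pow_mul, I_pow_four, one_pow]]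
  simp

lemma norm_nome_le {τ : ℂ} (h : 1 ≤ τ.im) : ‖nome τ‖ ≤ 1 / 2 := by
  rw [norm_nome]
  have h1 : Real.exp (-Real.pi * τ.im) ≤ Real.exp (-1) := by
    apply Real.exp_le_exp.mpr
    nlinarith [Real.pi_gt_three]
  have h2 : Real.exp (-1) ≤ 1 / 2 := by
    rw [Real.exp_neg, inv_eq_one_div]
    apply one_div_le_one_div_of_le (by norm_num)
    linarith [Real.add_one_le_exp (1 : ℝ)]
  linarith

lemma tail_bound {q : ℂ} (hq : ‖q‖ ≤ 1 / 2) :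
    ‖∏' n : ℕ, (1 - q ^ (n + 3 + 1)) - 1‖ ≤ 4 * ‖q‖ ^ 4 := by
  have hq1 : ‖q‖ < 1 := by linarith
  have hs : Summable fun n : ℕ => ‖-q ^ (n + 3 + 1)‖ := by
    simp only [norm_neg, norm_pow]
    simp_rw [add_assoc, pow_add]
    exact (summable_geometric_of_lt_one (norm_nonneg _) hq1).mul_right _
  have hsum : ∑' n : ℕ, ‖-q ^ (n + 3 + 1)‖ ≤ 2 * ‖q‖ ^ 4 := by
    simp only [norm_neg, norm_pow]
    simp_rw [add_assoc, pow_add]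
    rw [tsum_mul_right, tsum_geometric_of_lt_one (norm_nonneg _) hq1]
    norm_num
    rw [← pow_succ]
    gcongr
    rw [inv_le_comm₀ (by linarith) (by norm_num)]
    linarith
  have hm : Multipliable fun n : ℕ => 1 + (-q ^ (n + 3 + 1)) :=
    multipliable_one_add_of_summable hs
  have ht : Tendsto (fun s : Finset ℕ => ‖∏ n ∈ s, (1 + (-q ^ (n + 3 + 1))) - 1‖) atTop
      (𝓝 ‖∏' n : ℕ, (1 - q ^ (n + 3 + 1)) - 1‖) := by
    simp only [sub_eq_add_neg (1 : ℂ) (q ^ _)]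
    exact (hm.hasProd.sub_const 1).norm
  refine le_of_tendsto ht (Eventually.of_forall fun s => ?_)
  refine (Finset.norm_prod_one_add_sub_one_le s _).trans ?_
  have h1 : ∑ n ∈ s, ‖-q ^ (n + 3 + 1)‖ ≤ 2 * ‖q‖ ^ 4 :=
    (hs.sum_le_tsum s (fun _ _ => norm_nonneg _)).trans hsum
  have h0 : 0 ≤ ∑ n ∈ s, ‖-q ^ (n + 3 + 1)‖ := Finset.sum_nonneg fun _ _ => norm_nonneg _
  have h4 : ‖q‖ ^ 4 ≤ (1/2) ^ 4 := by gcongr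
  have h5 := Real.abs_exp_sub_one_le (x := ∑ n ∈ s, ‖-q ^ (n + 3 + 1)‖)
    (by rw [abs_of_nonneg h0]; norm_num at h4; linarith)
  rw [abs_of_nonneg h0] at h5
  linarith [le_abs_self (Real.exp (∑ n ∈ s, ‖-q ^ (n + 3 + 1)‖) - 1)]

lemma eulerP_asy : Asy eulerP 1 0 (-1) 0 (-1) 0 0 := by
  have hR : Asy (fun τ => ∏' n : ℕ, (1 - (nome τ ^ 2) ^ (n + 3 + 1))) 1 0 0 0 0 0 0 := by
    refine IsBigO.of_bound 4 (eventually_imInf (y := 1) fun τ hτ => ?_)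
    have h1 := norm_nome_le hτ
    have h2 : ‖nome τ ^ 2‖ ≤ 1 / 2 := by
      rw [norm_pow]; nlinarith [norm_nonneg (nome τ)]
    have h3 := tail_bound h2
    rw [show pol7 1 0 0 0 0 0 0 (nome τ) = 1 by simp [pol7]]
    refine h3.trans ?_
    rw [norm_pow, norm_pow, ← pow_mul]
    have : ‖nome τ‖ ^ (2 * 4) ≤ ‖nome τ‖ ^ 7 :=
      pow_le_pow_of_le_one (norm_nonneg _) (by linarith) (by norm_num)
    linarith
  have hP := (Asy.poly 1 0 (-1) 0 0 0 0).mul ((Asy.poly 1 0 0 0 (-1) 0 0).mul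
    ((Asy.poly 1 0 0 0 0 0 (-1)).mul hR))
  refine (hP.congr (fun τ hτ => ?_)).coeffs ?_ ?_ ?_ ?_ ?_ ?_ ?_ <;> try norm_num
  have hq : ‖nome τ ^ 2‖ < 1 := by
    rw [norm_pow]; nlinarith [norm_nonneg (nome τ), norm_nome_le hτ]
  have hm : Multipliable fun n : ℕ => 1 - (nome τ ^ 2) ^ (n + 3 + 1) := by
    simp only [sub_eq_add_neg]
    refine multipliable_one_add_of_summable ?_
    simp only [norm_neg, norm_pow (nome τ ^ 2)]
    simp_rw [add_assoc, pow_add]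
    exact (summable_geometric_of_lt_one (norm_nonneg _) hq).mul_right _
  rw [eulerP, ← Multipliable.prod_mul_tprod_nat_mul' (f := fun n => 1 - (nome τ ^ 2) ^ (n + 1)) hm]
  simp only [Finset.prod_range_succ, Finset.prod_range_zero, pol7]
  ring

lemma D_asy : Asy (fun τ => eulerP τ ^ 24) 1 0 (-24) 0 252 0 (-1472) := by
  have h2 := eulerP_asy.mul eulerP_asy
  have h4 := h2.mul h2
  have h8 := h4.mul h4
  have h24 := (h8.mul h8).mul h8
  refine (h24.congr (fun τ hτ => ?_)).coeffs ?_ ?_ ?_ ?_ ?_ ?_ ?_ <;> try norm_num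
  ring

lemma Dinv_asy : Asy (fun τ => (eulerP τ ^ 24)⁻¹) 1 0 24 0 324 0 3200 := by
  refine D_asy.inv (g := fun τ => pol7 1 0 24 0 324 0 3200 (nome τ)) rfl ?_
    fun τ hτ => pow_ne_zero _ (eulerP_ne (by linarith))
  exact (D_asy.mul (Asy.poly 1 0 24 0 324 0 3200)).coeffs (by norm_num) (by norm_num) (by norm_num)
    (by norm_num) (by norm_num) (by norm_num) (by norm_num)
end

noncomputable section
open Complex MeasureTheory Filter Topology Asymptotics

/-- fourth power of `θ₃` -/
def JY (τ : ℂ) : ℂ := jacobiTheta τ ^ 4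
/-- fourth power of `θ₄` -/
def JZ (τ : ℂ) : ℂ := JY (τ + 1)
/-- fourth power of `θ₂` -/
def JX (τ : ℂ) : ℂ := nome τ * jacobiTheta₂ (-τ / 2) τ ^ 4

lemma im_S_pos {τ : ℂ} (h : 0 < τ.im) : 0 < (-1 / τ).im := by
  have hne : τ ≠ 0 := by rintro rfl; simp at h
  rw [neg_div, one_div, neg_im, inv_im]
  have := normSq_pos.mpr hne
  rw [neg_div, neg_neg]; positivity

lemma JY_diff {τ : ℂ} (h : 0 < τ.im) : DifferentiableAt ℂ JY τ :=
  (differentiableAt_jacobiTheta h).pow 4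

lemma JZ_diff {τ : ℂ} (h : 0 < τ.im) : DifferentiableAt ℂ JZ τ := by
  have : DifferentiableAt ℂ JY (τ + 1) := JY_diff (by simpa using h)
  exact this.comp τ (f := fun τ => τ + 1) (by fun_prop)

lemma nome_diff (τ : ℂ) : DifferentiableAt ℂ nome τ := by
  unfold nome; fun_prop

lemma JX_diff {τ : ℂ} (h : 0 < τ.im) : DifferentiableAt ℂ JX τ := by
  have h1 := (hasFDerivAt_jacobiTheta₂ (-τ / 2) h).differentiableAt
  have h2 : DifferentiableAt ℂ (fun τ : ℂ => ((-τ / 2, τ) : ℂ × ℂ)) τ := by fun_prop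
  exact (nome_diff τ).mul ((h1.comp τ (f := fun τ : ℂ => ((-τ / 2, τ) : ℂ × ℂ)) h2).pow 4)

lemma JY_two (τ : ℂ) : JY (τ + 2) = JY τ := by
  rw [JY, JY, add_comm, jacobiTheta_two_add]

lemma cpow_half_four (z : ℂ) : (z ^ (1 / 2 : ℂ)) ^ 4 = z ^ 2 := by
  rw [← cpow_mul_nat]
  norm_num

lemma negI_sq (τ : ℂ) : (-I * τ) ^ 2 = -τ ^ 2 := by
  rw [mul_pow, neg_sq, I_sq]; ring

lemma JY_S {τ : ℂ} (h : 0 < τ.im) : JY (-1 / τ) = -τ ^ 2 * JY τ := by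
  have hne : τ ≠ 0 := by rintro rfl; simp at h
  have h1 := jacobiTheta₂_functional_equation 0 τ
  rw [JY, JY, jacobiTheta_eq_jacobiTheta₂, jacobiTheta_eq_jacobiTheta₂, h1]
  simp only [zero_div, mul_pow, div_pow]
  rw [cpow_half_four, negI_sq]
  simp
  field_simp

lemma theta_shift (τ : ℂ) : jacobiTheta (τ + 1) = jacobiTheta₂ (1 / 2) τ := by
  rw [jacobiTheta, jacobiTheta₂]
  refine tsum_congr fun n => ?_
  rw [jacobiTheta₂_term, exp_eq_exp_iff_exists_int]
  obtain ⟨k, hk⟩ := Int.even_mul_pred_self n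
  refine ⟨k, ?_⟩
  have : (n : ℂ) * (n - 1) = k + k := by exact_mod_cast hk
  have h2 : (n : ℂ) ^ 2 = n + 2 * k := by linear_combination this
  rw [mul_add, mul_one, h2]; ring

lemma JX_S {τ : ℂ} (h : 0 < τ.im) : JX (-1 / τ) = -τ ^ 2 * JZ τ := by
  have hne : τ ≠ 0 := by rintro rfl; simp at h
  have h1 := jacobiTheta₂_functional_equation (1 / 2) τ
  rw [JX, JZ, JY, theta_shift, h1]
  simp only [mul_pow, div_pow]
  rw [cpow_half_four, negI_sq, ← exp_nat_mul, nome]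
  have e1 : (Real.pi * I * (-1 / τ) : ℂ) = ((4 : ℕ) : ℂ) * (-Real.pi * I * (1 ^ 2 / 2 ^ 2) / τ) := by
    push_cast; field_simp; norm_num
  have e2 : -(-1 / τ) / 2 = 1 / 2 / τ := by field_simp
  rw [e1, e2]
  simp
  field_simp

lemma SS {τ : ℂ} : -1 / (-1 / τ) = τ := by simp [neg_div]

lemma JZ_S {τ : ℂ} (h : 0 < τ.im) : JZ (-1 / τ) = -τ ^ 2 * JX τ := by
  have hne : τ ≠ 0 := by rintro rfl; simp at h
  have := JX_S (im_S_pos h)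
  rw [SS] at this
  rw [this]
  field_simp

lemma JZ_T (τ : ℂ) : JZ (τ + 1) = JY τ := by
  rw [JZ, add_assoc, show (1 + 1 : ℂ) = 2 by norm_num, JY_two]

/-- exponents for `θ₂` -/
def nuX (n : ℤ) : ℕ := (n ^ 2 - n).toNat
/-- exponents for `θ₃` -/
def nuY (n : ℤ) : ℕ := (n ^ 2).toNat

lemma nuX_cast (n : ℤ) : (nuX n : ℤ) = n ^ 2 - n := by
  rw [nuX, Int.toNat_of_nonneg]
  rcases lt_or_ge n 1 with h | h <;> nlinarith

lemma nuY_cast (n : ℤ) : (nuY n : ℤ) = n ^ 2 := by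
  rw [nuY, Int.toNat_of_nonneg (sq_nonneg n)]

lemma theta2_eq (τ : ℂ) : jacobiTheta₂ (-τ / 2) τ = ∑' n : ℤ, nome τ ^ nuX n := by
  rw [jacobiTheta₂]
  refine tsum_congr fun n => ?_
  rw [jacobiTheta₂_term, nome, ← exp_nat_mul]
  congr 1
  have : (nuX n : ℂ) = n ^ 2 - n := by exact_mod_cast congrArg (Int.cast (R := ℂ)) (nuX_cast n)
  rw [this]; ring

lemma theta3_eq (τ : ℂ) : jacobiTheta τ = ∑' n : ℤ, nome τ ^ nuY n := by
  rw [jacobiTheta]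
  refine tsum_congr fun n => ?_
  rw [nome, ← exp_nat_mul]
  congr 1
  have : (nuY n : ℂ) = n ^ 2 := by exact_mod_cast congrArg (Int.cast (R := ℂ)) (nuY_cast n)
  rw [this]; ring

lemma JX_T (τ : ℂ) : JX (τ + 1) = - JX τ := by
  rw [JX, JX, theta2_eq, theta2_eq, nome_add_one]
  have : ∀ n, (-nome τ) ^ nuX n = nome τ ^ nuX n := by
    intro n
    apply Even.neg_pow
    have h1 := Int.even_mul_pred_self n
    have h2 := nuX_cast n
    have : (nuX n : ℤ) = n * (n - 1) := by rw [h2]; ring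
    rw [← this] at h1
    exact_mod_cast h1
  simp only [this]
  ring

lemma nu_card (ν : ℤ → ℕ) (h : ∀ n : ℤ, n ^ 2 - |n| ≤ ν n) (k : ℕ) (hk : k ≤ 6) :
    Set.ncard {n | ν n = k} = ((Finset.Icc (-3 : ℤ) 3).filter fun n => ν n = k).card := by
  rw [← Set.ncard_coe_finset]
  congr 1
  ext n
  simp only [Set.mem_ofPred_eq, Finset.coe_filter, Finset.mem_Icc]
  refine ⟨fun hn => ⟨?_, hn⟩, fun hn => hn.2⟩
  have := h n
  rw [hn] at this
  have hk' : (k : ℤ) ≤ 6 := by exact_mod_cast hk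
  have h3 : |n| ≤ 3 := by
    rw [← sq_abs] at this
    nlinarith [abs_nonneg n]
  exact abs_le.mp h3

lemma summable_nu (ν : ℤ → ℕ) (h : ∀ n : ℤ, n ^ 2 - |n| ≤ ν n) :
    Summable fun n => Real.exp (-Real.pi * ν n) := by
  have := summable_pow_mul_jacobiTheta₂_term_bound (1 / 2) one_pos 0
  simp only [pow_zero, one_mul] at this
  refine Summable.of_nonneg_of_le (fun _ => (Real.exp_pos _).le) (fun n => ?_) this
  apply Real.exp_le_exp.mpr
  have h1 : (n : ℝ) ^ 2 - |(n : ℝ)| ≤ ν n := by exact_mod_cast h n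
  rw [Int.cast_abs]
  nlinarith [Real.pi_pos, mul_le_mul_of_nonneg_left h1 Real.pi_pos.le]

lemma theta3_asy : Asy jacobiTheta 1 2 0 0 2 0 0 := by
  have hν : ∀ n : ℤ, n ^ 2 - |n| ≤ nuY n := fun n => by
    rw [nuY_cast]; linarith [abs_nonneg n]
  refine ((Asy.of_count nuY (summable_nu nuY hν)).congr fun τ _ => (theta3_eq τ).symm).coeffs
    ?_ ?_ ?_ ?_ ?_ ?_ ?_
  all_goals
    rw [nu_card nuY hν _ (by norm_num)]
    norm_cast

lemma theta2_asy : Asy (fun τ => jacobiTheta₂ (-τ / 2) τ) 2 0 2 0 0 0 2 := by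
  have hν : ∀ n : ℤ, n ^ 2 - |n| ≤ nuX n := fun n => by
    rw [nuX_cast]; linarith [le_abs_self n]
  refine ((Asy.of_count nuX (summable_nu nuX hν)).congr fun τ _ => (theta2_eq τ).symm).coeffs
    ?_ ?_ ?_ ?_ ?_ ?_ ?_
  all_goals
    rw [nu_card nuX hν _ (by norm_num)]
    norm_cast

lemma JY_asy : Asy JY 1 8 24 32 24 48 96 := by
  have h2 := theta3_asy.mul theta3_asy
  refine ((h2.mul h2).congr (fun τ hτ => ?_)).coeffs ?_ ?_ ?_ ?_ ?_ ?_ ?_ <;> try norm_num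
  rw [JY]; ring

lemma JZ_asy : Asy JZ 1 (-8) 24 (-32) 24 (-48) 96 := JY_asy.shift

lemma JX_asy : Asy JX 0 16 0 64 0 96 0 := by
  have h2 := theta2_asy.mul theta2_asy
  refine (((Asy.poly 0 1 0 0 0 0 0).mul (h2.mul h2)).congr (fun τ hτ => ?_)).coeffs
    ?_ ?_ ?_ ?_ ?_ ?_ ?_ <;> try norm_num
  rw [JX, pol7]; ring
end

noncomputable section
open Complex MeasureTheory Filter Topology Asymptotics

/-- weight 26 combination -/
def H1 (F3 F2 : ℂ → ℂ) (τ : ℂ) : ℂ :=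
  F3 τ * (JY τ * (JX τ - JZ τ)) - F3 (τ + 1) * (JZ τ * (JX τ + JY τ)) + F2 τ * (JX τ * (JY τ + JZ τ))

/-- weight 38 combination -/
def H2 (F3 F2 : ℂ → ℂ) (τ : ℂ) : ℂ :=
  F3 τ * (JY τ * (JX τ - JZ τ) * (JX τ * JZ τ) ^ 3)
    + F3 (τ + 1) * (JZ τ * (JX τ + JY τ) * (JX τ * JY τ) ^ 3)
    - F2 τ * (JX τ * (JY τ + JZ τ) * (JY τ * JZ τ) ^ 3)

/-- the transformation laws for a theta series and its shadow in dimension 44 -/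
structure ThetaPair (F3 F2 : ℂ → ℂ) : Prop where
  d3 : ∀ τ, 0 < τ.im → DifferentiableAt ℂ F3 τ
  d2 : ∀ τ, 0 < τ.im → DifferentiableAt ℂ F2 τ
  T3 : ∀ τ, 0 < τ.im → F3 (τ + 2) = F3 τ
  S3 : ∀ τ, 0 < τ.im → F3 (-1 / τ) = -τ ^ 22 * F3 τ
  S4 : ∀ τ, 0 < τ.im → F3 (-1 / τ + 1) = -τ ^ 22 * F2 τ
  T2 : ∀ τ, 0 < τ.im → F2 (τ + 1) = - F2 τ

namespace ThetaPair
variable {F3 F2 : ℂ → ℂ}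

lemma S2 (h : ThetaPair F3 F2) {τ : ℂ} (hτ : 0 < τ.im) : F2 (-1 / τ) = -τ ^ 22 * F3 (τ + 1) := by
  have hne : τ ≠ 0 := by rintro rfl; simp at hτ
  have := h.S4 _ (im_S_pos hτ)
  rw [SS] at this
  rw [this]; field_simp

lemma d4 (h : ThetaPair F3 F2) {τ : ℂ} (hτ : 0 < τ.im) : DifferentiableAt ℂ (fun τ => F3 (τ + 1)) τ :=
  (h.d3 (τ + 1) (by simpa using hτ)).comp τ (f := fun τ => τ + 1) (by fun_prop)

lemma T4 (h : ThetaPair F3 F2) {τ : ℂ} (hτ : 0 < τ.im) : F3 (τ + 1 + 1) = F3 τ := by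
  rw [add_assoc, show (1 + 1 : ℂ) = 2 by norm_num, h.T3 τ hτ]

lemma rel1 (h : ThetaPair F3 F2) {A4 A5 A6 B1 B3 B5 : ℂ} (h3 : Asy F3 1 0 0 0 A4 A5 A6) (h2 : Asy F2 0 B1 0 B3 0 B5 0) :
    A4 = 6600 + 1216 * B1 + 16 * B3 := by
  have hA := ((((h3.mul (JY_asy.mul (JX_asy.sub JZ_asy))).sub
    (h3.shift.mul (JZ_asy.mul (JX_asy.add JY_asy)))).add
    (h2.mul (JX_asy.mul (JY_asy.add JZ_asy))))).mul (Dinv_asy.mul Dinv_asy)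
  have := const_term (G := fun τ => H1 F3 F2 τ / Dl τ ^ 2) ?_ ?_ ?_ (4 : Fin 7)
    (hA.congr fun τ hτ => ?_)
  · simp only [Matrix.cons_val] at this
    linear_combination (-1 / 2) * this
  · intro z hz
    have d3 := h.d3 z hz
    have d2 := h.d2 z hz
    have d4 := h.d4 hz
    have dX := JX_diff hz
    have dY := JY_diff hz
    have dZ := JZ_diff hz
    have h7 := Dl_diff hz
    have h8 : Dl z ^ 2 ≠ 0 := pow_ne_zero _ (Dl_ne hz)
    exact ((((d3.mul (dY.mul (dX.sub dZ))).sub (d4.mul (dZ.mul (dX.add dY)))).add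
      (d2.mul (dX.mul (dY.add dZ))))).div (h7.pow 2) h8
  · intro z hz
    simp only [H1]
    rw [h.T4 hz, h.T2 z hz, Dl_T, JZ_T, JX_T, show JY (z + 1) = JZ z from rfl]
    ring
  · intro z hz
    have hne : z ≠ 0 := by rintro rfl; simp at hz
    simp only [H1]
    rw [h.S3 z hz, h.S4 z hz, h.S2 hz, Dl_S hz, JX_S hz, JY_S hz, JZ_S hz]
    have := Dl_ne hz
    field_simp
    ring
  · have h1 : eulerP τ ≠ 0 := eulerP_ne (by linarith)
    have h2 := nome_ne τ
    simp only [H1, Dl_eq]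
    rw [show ((4 : Fin 7) : ℕ) = 4 from rfl]
    field_simp

lemma rel2 (h : ThetaPair F3 F2) {A4 A5 A6 B5 : ℂ} (h3 : Asy F3 1 0 0 0 A4 A5 A6) (h2 : Asy F2 0 0 0 0 0 B5 0) :
    51904512 - 32 * B5 = 0 := by
  have hXZ := JX_asy.mul JZ_asy
  have hXY := JX_asy.mul JY_asy
  have hYZ := JY_asy.mul JZ_asy
  have hA := ((((h3.mul ((JY_asy.mul (JX_asy.sub JZ_asy)).mul (hXZ.mul (hXZ.mul hXZ)))).add
    (h3.shift.mul ((JZ_asy.mul (JX_asy.add JY_asy)).mul (hXY.mul (hXY.mul hXY))))).sub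
    (h2.mul ((JX_asy.mul (JY_asy.add JZ_asy)).mul (hYZ.mul (hYZ.mul hYZ)))))).mul
    (Dinv_asy.mul (Dinv_asy.mul Dinv_asy))
  have := const_term (G := fun τ => H2 F3 F2 τ / Dl τ ^ 3) ?_ ?_ ?_ (6 : Fin 7)
    (hA.congr fun τ hτ => ?_)
  · simp only [Matrix.cons_val] at this
    linear_combination this
  · intro z hz
    have d3 := h.d3 z hz
    have d2 := h.d2 z hz
    have d4 := h.d4 hz
    have dX := JX_diff hz
    have dY := JY_diff hz
    have dZ := JZ_diff hz
    have h7 := Dl_diff hz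
    have h8 : Dl z ^ 3 ≠ 0 := pow_ne_zero _ (Dl_ne hz)
    exact ((((d3.mul ((dY.mul (dX.sub dZ)).mul ((dX.mul dZ).pow 3))).add
      (d4.mul ((dZ.mul (dX.add dY)).mul ((dX.mul dY).pow 3)))).sub
      (d2.mul ((dX.mul (dY.add dZ)).mul ((dY.mul dZ).pow 3))))).div (h7.pow 3) h8
  · intro z hz
    simp only [H2]
    rw [h.T4 hz, h.T2 z hz, Dl_T, JZ_T, JX_T, show JY (z + 1) = JZ z from rfl]
    ring
  · intro z hz
    have hne : z ≠ 0 := by rintro rfl; simp at hz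
    simp only [H2]
    rw [h.S3 z hz, h.S4 z hz, h.S2 hz, Dl_S hz, JX_S hz, JY_S hz, JZ_S hz]
    have := Dl_ne hz
    field_simp
    ring
  · have h1 : eulerP τ ≠ 0 := eulerP_ne (by linarith)
    have h2 := nome_ne τ
    simp only [H2, Dl_eq]
    rw [show ((6 : Fin 7) : ℕ) = 6 from rfl]
    field_simp

end ThetaPair
end

noncomputable section
open Complex MeasureTheory Filter Topology Asymptotics

def zc {d : Type*} (m : d → ℤ) : d → ℝ := fun i => (m i : ℝ)

theorem zc_add {d : Type*} (m n : d → ℤ) : zc (m + n) = zc m + zc n := by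
  funext i; simp [zc]

def ubox {d : Type*} (m : d → ℤ) : Set (d → ℝ) := {x | ∀ i, x i ∈ Set.Ioc (m i : ℝ) (m i + 1)}

theorem ubox_eq_pi {d : Type*} (m : d → ℤ) :
    ubox m = Set.pi Set.univ fun i => Set.Ioc (m i : ℝ) (m i + 1) := by
  ext x; simp [ubox]

theorem ubox_meas {d : Type*} [Fintype d] (m : d → ℤ) : MeasurableSet (ubox m) := by
  rw [ubox_eq_pi]
  exact MeasurableSet.univ_pi fun i => measurableSet_Ioc

theorem ubox_disj {d : Type*} : Pairwise (Function.onFun Disjoint (ubox (d := d))) := by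
  intro m n hmn
  rw [Function.onFun, Set.disjoint_left]
  intro x hx hy
  apply hmn
  funext i
  have h1 := hx i
  have h2 := hy i
  rw [Set.mem_Ioc] at h1 h2
  have h3 : (m i : ℝ) < n i + 1 := by linarith
  have h4 : (n i : ℝ) < m i + 1 := by linarith
  have h3' : m i < n i + 1 := by exact_mod_cast h3
  have h4' : n i < m i + 1 := by exact_mod_cast h4
  omega

theorem ubox_cover {d : Type*} : (⋃ m, ubox (d := d) m) = Set.univ := by
  rw [Set.eq_univ_iff_forall]
  intro x
  rw [Set.mem_iUnion]
  refine ⟨fun i => ⌈x i⌉ - 1, fun i => ?_⟩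
  rw [Set.mem_Ioc]
  push_cast
  have := Int.ceil_lt_add_one (x i)
  have := Int.le_ceil (x i)
  constructor <;> linarith

theorem ubox_vol {d : Type*} [Fintype d] (m : d → ℤ) : volume (ubox m) < ⊤ := by
  rw [ubox_eq_pi, Real.volume_pi_Ioc]
  exact ENNReal.prod_lt_top fun i _ => ENNReal.ofReal_lt_top

theorem mFourier_zc {d : Type*} [Fintype d] (n : d → ℤ) (x : d → ℝ) :
    UnitAddTorus.mFourier (-n) (fun i => (x i : UnitAddCircle)) =
      cexp (-(2 * Real.pi * I) * ∑ i, (n i : ℂ) * x i) := by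
  simp only [UnitAddTorus.mFourier, ContinuousMap.coe_mk, fourier_coe_apply]
  rw [← Complex.exp_sum, Finset.mul_sum]
  congr 1
  apply Finset.sum_congr rfl
  intro i _
  simp
  ring

theorem poisson_pi {d : Type*} [Fintype d] (g : (d → ℝ) → ℂ) (hg : Continuous g)
    (hi : Integrable g) (u : (d → ℤ) → ℝ) (hu : Summable u)
    (hb : ∀ m x, ‖x‖ ≤ 2 → ‖g (x + zc m)‖ ≤ u m)
    (hs : Summable fun n : d → ℤ => ∫ x : d → ℝ, cexp (-(2 * Real.pi * I) * ∑ i, (n i : ℂ) * x i) * g x) :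
    ∑' m : d → ℤ, g (zc m) =
      ∑' n : d → ℤ, ∫ x : d → ℝ, cexp (-(2 * Real.pi * I) * ∑ i, (n i : ℂ) * x i) * g x := by
  set P : (d → ℝ) → ℂ := fun x => ∑' m : d → ℤ, g (x + zc m) with hP
  have hper : ∀ (x : d → ℝ) (k : d → ℤ), P (x + zc k) = P x := by
    intro x k
    simp only [hP]
    rw [← (Equiv.addLeft k).tsum_eq (fun m => g (x + zc m))]
    apply tsum_congr
    intro m
    simp [zc_add, add_assoc]
  have hcont0 : ContinuousOn P (Metric.ball 0 2) := by
    apply continuousOn_tsum (u := u)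
    · intro m
      exact (hg.comp (continuous_id.add continuous_const)).continuousOn
    · exact hu
    · intro m x hx
      apply hb
      rw [mem_ball_zero_iff] at hx
      exact hx.le
  have hcont : Continuous P := by
    rw [continuous_iff_continuousAt]
    intro x0
    set k : d → ℤ := fun i => -⌊x0 i⌋ with hk
    have hmem : x0 + zc k ∈ Metric.ball (0 : d → ℝ) 2 := by
      rw [mem_ball_zero_iff, pi_norm_lt_iff (by norm_num)]
      intro i
      simp only [hk, zc, Pi.add_apply, Int.cast_neg, Real.norm_eq_abs]
      rw [abs_lt]
      have := Int.floor_le (x0 i)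
      have := Int.lt_floor_add_one (x0 i)
      constructor <;> linarith
    have h1 : ContinuousAt P (x0 + zc k) := hcont0.continuousAt (Metric.isOpen_ball.mem_nhds hmem)
    have h2 : ContinuousAt (fun x => P (x + zc k)) x0 :=
      ContinuousAt.comp (f := fun x => x + zc k) h1 (by fun_prop)
    simpa only [hper] using h2
  -- descent
  set Φ0 : UnitAddTorus d → ℂ := fun t => P (fun i => ((AddCircle.equivIoc (1:ℝ) 0 (t i)) : ℝ)) with hΦ0
  have hdesc : ∀ x : d → ℝ, Φ0 (fun i => (x i : UnitAddCircle)) = P x := by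
    intro x
    have : ∀ i, ∃ k : ℤ, ((AddCircle.equivIoc (1:ℝ) 0 ((x i : ℝ) : UnitAddCircle)) : ℝ) = x i + k := by
      intro i
      have h := AddCircle.coe_equivIoc (p := (1:ℝ)) (a := 0) (y := ((x i : ℝ) : UnitAddCircle))
      rw [← sub_eq_zero, ← AddCircle.coe_sub, AddCircle.coe_eq_zero_iff] at h
      obtain ⟨k, hk⟩ := h
      refine ⟨k, ?_⟩
      rw [zsmul_eq_mul, mul_one] at hk
      linarith
    choose k hk using this
    have h2 : (fun i => ((AddCircle.equivIoc (1:ℝ) 0 ((x i : ℝ) : UnitAddCircle)) : ℝ)) = x + zc k := by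
      funext i; rw [hk]; rfl
    simp only [hΦ0]
    rw [h2, hper]
  have hq : IsOpenQuotientMap (Pi.map fun (_ : d) (x : ℝ) => (x : UnitAddCircle)) :=
    IsOpenQuotientMap.piMap fun i => QuotientAddGroup.isOpenQuotientMap_mk
  have hΦc : Continuous Φ0 := by
    rw [← hq.continuous_comp_iff]
    have : Φ0 ∘ (Pi.map fun (_ : d) (x : ℝ) => (x : UnitAddCircle)) = P := by
      funext x; exact hdesc x
    rw [this]; exact hcont
  set Φ : C(UnitAddTorus d, ℂ) := ⟨Φ0, hΦc⟩ with hΦ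
  have hcoef : ∀ n : d → ℤ, UnitAddTorus.mFourierCoeff Φ n =
      ∫ x : d → ℝ, cexp (-(2 * Real.pi * I) * ∑ i, (n i : ℂ) * x i) * g x := by
    intro n
    set e : (d → ℝ) → ℂ := fun x => cexp (-(2 * Real.pi * I) * ∑ i, (n i : ℂ) * x i) with he
    have he1 : ∀ x, ‖e x‖ = 1 := by
      intro x
      have : -(2 * Real.pi * I) * ∑ i, (n i : ℂ) * x i = ((-(2 * Real.pi) * ∑ i, (n i : ℝ) * x i : ℝ) : ℂ) * I := by
        push_cast; ring
      simp only [he]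
      rw [this, Complex.norm_exp_ofReal_mul_I]
    have hec : Continuous e := by simp only [he]; fun_prop
    have heper : ∀ x m, e (x + zc m) = e x := by
      intro x m
      simp only [he]
      rw [← mFourier_zc, ← mFourier_zc]
      congr 1
      funext i
      simp only [zc, Pi.add_apply, AddCircle.coe_add]
      have : ((m i : ℝ) : UnitAddCircle) = 0 := by
        rw [AddCircle.coe_eq_zero_iff]
        exact ⟨m i, by simp⟩
      rw [this, add_zero]
    rw [UnitAddTorus.mFourierCoeff_eq_integral _ n (fun i => (((0 : d → ℤ) i : ℤ) : ℝ))]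
    change ∫ x in ubox (0 : d → ℤ), _ = _
    have e1 : ∫ x in ubox (0 : d → ℤ), UnitAddTorus.mFourier (-n) (fun i => (x i : UnitAddCircle)) • Φ (fun i => (x i : UnitAddCircle))
        = ∫ x in ubox (0 : d → ℤ), ∑' m : d → ℤ, e x * g (x + zc m) := by
      apply integral_congr_ae
      refine Eventually.of_forall fun x => ?_
      simp only [smul_eq_mul]
      rw [mFourier_zc, tsum_mul_left]
      congr 1
      exact hdesc x
    rw [e1]
    have hx1 : ∀ x ∈ ubox (0 : d → ℤ), ‖x‖ ≤ 2 := by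
      intro x hx
      rw [pi_norm_le_iff_of_nonneg (by norm_num)]
      intro i
      have := hx i
      simp at this
      rw [Real.norm_eq_abs, abs_le]
      constructor <;> linarith
    have h1 : HasSum (fun m => ∫ x in ubox (0 : d → ℤ), e x * g (x + zc m))
        (∫ x in ubox (0 : d → ℤ), ∑' m : d → ℤ, e x * g (x + zc m)) := by
      have hbd : ∀ m, ∀ x ∈ ubox (0 : d → ℤ), ‖e x * g (x + zc m)‖ ≤ u m := by
        intro m x hx
        rw [norm_mul, he1, one_mul]
        exact hb m x (hx1 x hx)
      have : IsFiniteMeasure (volume.restrict (ubox (0 : d → ℤ))) := ⟨by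
        rw [Measure.restrict_apply_univ]; exact ubox_vol _⟩
      apply hasSum_integral_of_dominated_convergence (fun m _ => u m)
      · intro m
        exact (hec.mul (hg.comp (continuous_id.add continuous_const))).aestronglyMeasurable
      · intro m
        filter_upwards [ae_restrict_mem (ubox_meas _)] with x hx using hbd m x hx
      · exact Eventually.of_forall fun _ => hu
      · exact integrable_const _
      · filter_upwards [ae_restrict_mem (ubox_meas _)] with x hx
        exact (Summable.of_norm_bounded hu fun m => hbd m x hx).hasSum
    have h2 : ∀ m, ∫ x in ubox (0 : d → ℤ), e x * g (x + zc m) = ∫ x in ubox m, e x * g x := by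
      intro m
      have hpre : (fun x => x + zc m) ⁻¹' (ubox m) = ubox 0 := by
        ext x
        simp only [ubox, zc, Set.mem_preimage, Set.mem_ofPred_eq, Pi.add_apply, Set.mem_Ioc, Pi.zero_apply, Int.cast_zero]
        refine forall_congr' fun i => ?_
        constructor <;> rintro ⟨h, h'⟩ <;> constructor <;> linarith
      have := (measurePreserving_add_right (volume : Measure (d → ℝ)) (zc m)).setIntegral_preimage_emb
        (MeasurableEquiv.addRight (zc m)).measurableEmbedding (fun x => e x * g x) (ubox m)
      rw [← this, hpre]
      simp only [heper]
    simp only [h2] at h1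
    have hie : Integrable (fun x => e x * g x) := by
      apply hi.bdd_mul (c := 1) hec.aestronglyMeasurable
      exact Eventually.of_forall fun x => (he1 x).le
    have h3 := hasSum_integral_iUnion (μ := volume) (f := fun x => e x * g x) (s := ubox (d := d)) ubox_meas ubox_disj hie.integrableOn
    rw [ubox_cover, setIntegral_univ] at h3
    exact h1.unique h3
  have hsum : Summable (UnitAddTorus.mFourierCoeff Φ) := by
    refine hs.congr fun n => ?_
    rw [hcoef]
  have hfin := UnitAddTorus.hasSum_mFourier_series_apply_of_summable hsum (fun i : d => ((0 : ℝ) : UnitAddCircle))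
  have hz : Φ (fun i : d => ((0 : ℝ) : UnitAddCircle)) = ∑' m : d → ℤ, g (zc m) := by
    have := hdesc (fun _ => 0)
    change Φ0 _ = _
    rw [this]
    simp only [hP]
    apply tsum_congr
    intro m
    congr 1
    funext i
    simp
  rw [hz] at hfin
  rw [← hfin.tsum_eq]
  apply tsum_congr
  intro n
  rw [hcoef]
  have := mFourier_zc (-n) (fun _ : d => 0)
  rw [neg_neg] at this
  rw [this]
  simp
end

noncomputable section
open Complex MeasureTheory Filter Topology Asymptotics
open scoped RealInnerProductSpace

abbrev E44 := EuclideanSpace ℝ (Fin 44)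

theorem gauss_summable (Λ : Submodule ℤ E44) [DiscreteTopology Λ] [IsZLattice ℝ Λ] {r : ℝ} (hr : 0 < r) :
    Summable fun x : Λ => Real.exp (-r * ‖(x : E44)‖ ^ 2) := by
  set k := Module.finrank ℤ Λ + 1 with hk
  have h1 := ZLattice.summable_norm_pow_inv Λ (2 * k) (by omega)
  refine Summable.of_norm_bounded_eventually (h1.mul_left ((Nat.factorial k : ℝ) / r ^ k)) ?_
  have : ∀ᶠ x : Λ in cofinite, x ≠ 0 := by
    rw [eventually_cofinite]; simp
  filter_upwards [this] with x hx
  have hx0 : 0 < ‖(x : E44)‖ := by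
    rw [norm_pos_iff]; simpa using hx
  rw [Real.norm_eq_abs, abs_of_pos (Real.exp_pos _)]
  have h2 := Real.pow_div_factorial_le_exp (r * ‖(x : E44)‖ ^ 2) (by positivity) k
  rw [neg_mul, Real.exp_neg]
  have h3 : (0:ℝ) < (r * ‖(x : E44)‖ ^ 2) ^ k / (Nat.factorial k : ℝ) := by positivity
  refine (inv_anti₀ h3 h2).trans (le_of_eq ?_)
  rw [inv_div, mul_pow, ← pow_mul, inv_pow]
  have : ‖x‖ = ‖(x : E44)‖ := rfl
  rw [this, ← div_eq_mul_inv, div_div]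

theorem norm_add_sq_lower (a w : E44) : ‖a‖ ^ 2 / 2 - ‖w‖ ^ 2 ≤ ‖a + w‖ ^ 2 := by
  have h : ‖a‖ ≤ ‖a + w‖ + ‖w‖ := by
    calc ‖a‖ = ‖(a + w) - w‖ := by simp
      _ ≤ _ := norm_sub_le _ _
  nlinarith [sq_nonneg (‖a+w‖ - ‖w‖), norm_nonneg a, norm_nonneg w, norm_nonneg (a + w)]

theorem gauss_integrable {β : ℂ} (hβ : 0 < β.re) : Integrable fun v : E44 => cexp (-β * ‖v‖ ^ 2) := by
  simpa using GaussianFourier.integrable_cexp_neg_mul_sq_norm_add hβ 0 (0 : E44)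

theorem norm_cexp_gauss (β : ℂ) (v : E44) : ‖cexp (-β * ‖v‖ ^ 2)‖ = Real.exp (-β.re * ‖v‖ ^ 2) := by
  rw [Complex.norm_exp]
  congr 1
  rw [← ofReal_pow, Complex.re_mul_ofReal]
  simp

theorem gauss_shift_fourier {β : ℂ} (hβ : 0 < β.re) (s y : E44) :
    ∫ v : E44, cexp (-(2 * Real.pi * I) * (⟪y, v⟫ : ℝ)) * cexp (-β * ‖v + s‖ ^ 2) =
      cexp (2 * Real.pi * I * (⟪y, s⟫ : ℝ)) * ((Real.pi / β) ^ 22 * cexp (-Real.pi ^ 2 * ‖y‖ ^ 2 / β)) := by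
  have h := fourier_gaussian_innerProductSpace hβ y
  rw [Real.fourier_eq'] at h
  have hd : ((Module.finrank ℝ E44 : ℂ) / 2) = ((22 : ℕ) : ℂ) := by
    rw [finrank_euclideanSpace_fin]; norm_num
  rw [hd, Complex.cpow_natCast] at h
  rw [← h, ← integral_const_mul, ← integral_sub_right_eq_self _ s]
  apply integral_congr_ae
  refine Eventually.of_forall fun v => ?_
  simp only [sub_add_cancel, smul_eq_mul]
  rw [← mul_assoc]
  congr 1
  rw [← Complex.exp_add]
  congr 1
  rw [inner_sub_right, real_inner_comm v y]
  push_cast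
  ring

theorem lat_poisson0 (Λ : Submodule ℤ E44) [DiscreteTopology Λ] [IsZLattice ℝ Λ]
    (hself : ∀ x : E44, x ∈ Λ ↔ ∀ y ∈ Λ, ∃ m : ℤ, ⟪x, y⟫ = (m : ℝ)) :
    ∃ C : ℝ, ∀ (β : ℂ) (s : E44), 0 < β.re →
      ∑' x : Λ, cexp (-β * ‖(x : E44) + s‖ ^ 2) =
        C * ((Real.pi / β) ^ 22 * ∑' y : Λ, cexp (2 * Real.pi * I * (⟪(y : E44), s⟫ : ℝ)) *
          cexp (-Real.pi ^ 2 * ‖(y : E44)‖ ^ 2 / β)) := by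
  classical
  have : Module.Finite ℤ Λ := ZLattice.module_finite ℝ Λ
  have : Module.Free ℤ Λ := ZLattice.module_free ℝ Λ
  let b := Module.Free.chooseBasis ℤ Λ
  set ι := Module.Free.ChooseBasisIndex ℤ Λ
  let B : Module.Basis ι ℝ E44 := b.ofZLatticeBasis ℝ Λ
  have hB : ∀ i, B i = (b i : E44) := fun i => b.ofZLatticeBasis_apply ℝ Λ i
  let A : (ι → ℝ) ≃L[ℝ] E44 := B.equivFunL.symm
  have hA : ∀ c, A c = ∑ i, c i • B i := fun c => by
    simp only [A]
    exact B.equivFun_symm_apply c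
  let eL : (ι → ℤ) ≃ Λ := b.equivFun.symm.toEquiv
  have heL : ∀ m, ((eL m : Λ) : E44) = A (zc m) := by
    intro m
    have h1 : eL m = ∑ i, m i • b i := b.equivFun_symm_apply m
    rw [h1, hA]
    push_cast
    apply Finset.sum_congr rfl
    intro i _
    rw [hB]
    exact (Int.cast_smul_eq_zsmul ℝ (m i) ((b i : Λ) : E44)).symm
  -- dual equivalence
  have hinn : ∀ y : Λ, ∀ i, ∃ m : ℤ, ⟪(y : E44), B i⟫ = (m : ℝ) := by
    intro y i
    rw [hB]
    exact (hself y).1 y.2 _ (b i).2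
  choose φ hφ using hinn
  have hφinner : ∀ (y : Λ) (c : ι → ℝ), ⟪(y : E44), A c⟫ = ∑ i, (φ y i : ℝ) * c i := by
    intro y c
    rw [hA, inner_sum]
    apply Finset.sum_congr rfl
    intro i _
    rw [inner_smul_right, hφ, mul_comm]
  have hbij : Function.Bijective φ := by
    constructor
    · intro y z h
      apply Subtype.ext
      apply InnerProductSpace.ext_inner_right_basis B
      intro i
      rw [hφ, hφ, h]
    · intro n
      let f : E44 →ₗ[ℝ] ℝ := B.constr ℝ (fun i => (n i : ℝ))
      let y : E44 := (InnerProductSpace.toDual ℝ E44).symm (LinearMap.toContinuousLinearMap f)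
      have hy : ∀ v, ⟪y, v⟫ = f v := by
        intro v
        simp only [y]
        rw [InnerProductSpace.toDual_symm_apply]
        rfl
      have hyB : ∀ i, ⟪y, B i⟫ = (n i : ℝ) := by
        intro i
        rw [hy]
        exact B.constr_basis ℝ _ i
      have hyL : y ∈ Λ := by
        rw [hself]
        intro x hx
        obtain ⟨m, hm⟩ := eL.surjective ⟨x, hx⟩
        refine ⟨∑ i, m i * n i, ?_⟩
        have hx2 : x = A (zc m) := by rw [← heL, hm]
        rw [hx2, hA, inner_sum]
        push_cast
        apply Finset.sum_congr rfl
        intro i _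
        rw [inner_smul_right, hyB]
        rfl
      refine ⟨⟨y, hyL⟩, ?_⟩
      funext i
      have := hφ ⟨y, hyL⟩ i
      rw [hyB] at this
      exact_mod_cast this.symm
  let eφ : Λ ≃ (ι → ℤ) := Equiv.ofBijective φ hbij
  -- Haar constant
  have hHaar : (Measure.map A (volume : Measure (ι → ℝ))).IsAddHaarMeasure := A.isAddHaarMeasure_map _
  have hsm := Measure.isAddLeftInvariant_eq_smul (Measure.map A (volume : Measure (ι → ℝ))) (volume : Measure E44)
  set c0 := Measure.addHaarScalarFactor (Measure.map A (volume : Measure (ι → ℝ))) (volume : Measure E44)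
  have hcv : ∀ f : E44 → ℂ, ∫ c : ι → ℝ, f (A c) = (c0 : ℝ) * ∫ v, f v := by
    intro f
    have h1 := A.toHomeomorph.measurableEmbedding.integral_map (μ := volume) f
    have h2 : ∫ y, f y ∂(Measure.map A (volume : Measure (ι → ℝ))) = ∫ c : ι → ℝ, f (A c) := h1
    rw [← h2, hsm, integral_smul_nnreal_measure]
    rfl
  have hci : ∀ f : E44 → ℂ, Integrable f → Integrable (fun c : ι → ℝ => f (A c)) := by
    intro f hf
    have h1 := A.toHomeomorph.measurableEmbedding.integrable_map_iff (μ := volume) (g := f)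
    apply h1.1
    change Integrable f (Measure.map A (volume : Measure (ι → ℝ)))
    rw [hsm]
    exact hf.smul_measure_nnreal
  refine ⟨c0, ?_⟩
  intro β s hβ
  set g : (ι → ℝ) → ℂ := fun c => cexp (-β * ‖A c + s‖ ^ 2) with hg
  set W : ℝ := ‖(A : (ι → ℝ) →L[ℝ] E44)‖ * 2 + ‖s‖ with hW
  have hW0 : 0 ≤ W := by positivity
  have hsumβ := gauss_summable Λ (r := β.re / 2) (by linarith)
  have hco : ∀ n : ι → ℤ, ∫ x : ι → ℝ, cexp (-(2 * Real.pi * I) * ∑ i, (n i : ℂ) * x i) * g x =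
      c0 * (cexp (2 * Real.pi * I * (⟪((eφ.symm n : Λ) : E44), s⟫ : ℝ)) *
        ((Real.pi / β) ^ 22 * cexp (-Real.pi ^ 2 * ‖((eφ.symm n : Λ) : E44)‖ ^ 2 / β))) := by
    intro n
    rw [← gauss_shift_fourier hβ]
    have := hcv (fun v => cexp (-(2 * Real.pi * I) * (⟪((eφ.symm n : Λ) : E44), v⟫ : ℝ)) * cexp (-β * ‖v + s‖ ^ 2))
    rw [show ((c0 : NNReal) : ℂ) = ((c0 : ℝ) : ℂ) from rfl, ← this]
    apply integral_congr_ae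
    refine Eventually.of_forall fun c => ?_
    simp only [hg]
    rw [hφinner]
    have h3 : φ (eφ.symm n) = n := eφ.apply_symm_apply n
    rw [h3]
    push_cast
    rfl
  have hmain := poisson_pi g (by simp only [hg]; fun_prop)
    (hci (fun v => cexp (-β * ‖v + s‖ ^ 2)) ((gauss_integrable hβ).comp_add_right s))
    (fun m => Real.exp (β.re * W ^ 2) * Real.exp (-(β.re / 2) * ‖((eL m : Λ) : E44)‖ ^ 2))
    ((eL.summable_iff.2 hsumβ).mul_left _) ?_ ?_
  · simp only [hco] at hmain
    rw [← eL.tsum_eq (fun x : Λ => cexp (-β * ‖(x : E44) + s‖ ^ 2)),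
      ← eφ.symm.tsum_eq (fun y : Λ => cexp (2 * Real.pi * I * (⟪(y : E44), s⟫ : ℝ)) *
          cexp (-Real.pi ^ 2 * ‖(y : E44)‖ ^ 2 / β)), ← tsum_mul_left, ← tsum_mul_left]
    calc _ = ∑' m : ι → ℤ, g (zc m) := by
          apply tsum_congr; intro m; simp only [hg]; rw [heL]
      _ = _ := hmain
      _ = _ := by
          apply tsum_congr; intro n; ring_nf
  · intro m x hx
    simp only [hg]
    rw [norm_cexp_gauss, heL, ← Real.exp_add, Real.exp_le_exp]
    have h1 : A (x + zc m) + s = A (zc m) + (A x + s) := by rw [map_add]; abel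
    have h2 : ‖A x + s‖ ≤ W := by
      refine (norm_add_le _ _).trans ?_
      have : ‖A x‖ ≤ ‖(A : (ι → ℝ) →L[ℝ] E44)‖ * ‖x‖ := (A : (ι → ℝ) →L[ℝ] E44).le_opNorm x
      have := mul_le_mul_of_nonneg_left hx (norm_nonneg (A : (ι → ℝ) →L[ℝ] E44))
      linarith
    have h3 := norm_add_sq_lower (A (zc m)) (A x + s)
    rw [← h1] at h3
    have h4 : ‖A x + s‖ ^ 2 ≤ W ^ 2 := pow_le_pow_left₀ (norm_nonneg _) h2 2
    nlinarith
  · simp only [hco]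
    apply Summable.mul_left
    have hre : 0 < (β⁻¹).re := by
      rw [Complex.inv_re]
      have : 0 < Complex.normSq β := Complex.normSq_pos.2 (by intro h; simp [h] at hβ)
      positivity
    have h5 := gauss_summable Λ (r := Real.pi ^ 2 * (β⁻¹).re) (by positivity)
    refine Summable.of_norm_bounded ((eφ.symm.summable_iff.2 h5).mul_left (‖(Real.pi / β) ^ 22‖)) ?_
    intro n
    have e1 : 2 * Real.pi * I * ((⟪((eφ.symm n : Λ) : E44), s⟫ : ℝ) : ℂ) = ((2 * Real.pi * ⟪((eφ.symm n : Λ) : E44), s⟫ : ℝ) : ℂ) * I := by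
      push_cast; ring
    have e2 : -(Real.pi : ℂ) ^ 2 * ‖((eφ.symm n : Λ) : E44)‖ ^ 2 / β = -(Real.pi ^ 2 * β⁻¹) * (‖((eφ.symm n : Λ) : E44)‖ : ℂ) ^ 2 := by
      rw [div_eq_mul_inv]; ring
    rw [norm_mul, norm_mul, e1, Complex.norm_exp_ofReal_mul_I, one_mul, e2, norm_cexp_gauss]
    have e3 : ((Real.pi : ℂ) ^ 2 * β⁻¹).re = Real.pi ^ 2 * (β⁻¹).re := by
      rw [← ofReal_pow, Complex.re_ofReal_mul]
    rw [e3]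
    rfl

theorem lat_poisson (Λ : Submodule ℤ E44) [DiscreteTopology Λ] [IsZLattice ℝ Λ]
    (hself : ∀ x : E44, x ∈ Λ ↔ ∀ y ∈ Λ, ∃ m : ℤ, ⟪x, y⟫ = (m : ℝ)) (τ : ℂ) (hτ : 0 < τ.im) (s : E44) :
    ∑' x : Λ, cexp (Real.pi * I * τ * ‖(x : E44) + s‖ ^ 2) =
      -(τ ^ 22)⁻¹ * ∑' y : Λ, cexp (Real.pi * I * (-1 / τ) * ‖(y : E44)‖ ^ 2) *
        cexp (2 * Real.pi * I * (⟪(y : E44), s⟫ : ℝ)) := by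
  obtain ⟨C, hC⟩ := lat_poisson0 Λ hself
  have hC1 : C = 1 := by
    have h := hC Real.pi 0 (by simpa using Real.pi_pos)
    have hpi : (Real.pi : ℂ) ≠ 0 := by exact_mod_cast Real.pi_ne_zero
    have h2 : ∀ y : Λ, cexp (2 * Real.pi * I * (⟪(y : E44), (0 : E44)⟫ : ℝ)) *
          cexp (-(Real.pi : ℂ) ^ 2 * ‖(y : E44)‖ ^ 2 / Real.pi) = ((Real.exp (-Real.pi * ‖(y : E44)‖ ^ 2) : ℝ) : ℂ) := by
      intro y
      rw [inner_zero_right]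
      push_cast
      simp only [mul_zero, Complex.exp_zero, one_mul]
      congr 1
      field_simp
    have h3 : ∀ y : Λ, cexp (-(Real.pi : ℂ) * ‖(y : E44) + 0‖ ^ 2) = ((Real.exp (-Real.pi * ‖(y : E44)‖ ^ 2) : ℝ) : ℂ) := by
      intro y
      rw [add_zero]
      push_cast
      rfl
    simp only [h2, h3] at h
    rw [← Complex.ofReal_tsum, div_self hpi, one_pow, one_mul, ← ofReal_mul] at h
    have h4 : 0 < ∑' y : Λ, Real.exp (-Real.pi * ‖(y : E44)‖ ^ 2) :=
      (gauss_summable Λ Real.pi_pos).tsum_pos (fun _ => (Real.exp_pos _).le) 0 (Real.exp_pos _)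
    have h5 := Complex.ofReal_injective h
    have h6 : (C - 1) * ∑' y : Λ, Real.exp (-Real.pi * ‖(y : E44)‖ ^ 2) = 0 := by linarith
    rcases mul_eq_zero.1 h6 with h7 | h7
    · linarith
    · exact absurd h7 h4.ne'
  have hτ0 : τ ≠ 0 := by intro h; simp [h] at hτ
  have hpi : (Real.pi : ℂ) ≠ 0 := by exact_mod_cast Real.pi_ne_zero
  have h := hC (-(Real.pi * I * τ)) s (by
    simp
    exact mul_pos Real.pi_pos hτ)
  rw [hC1, ofReal_one, one_mul, neg_neg] at h
  rw [h]
  have e1 : ((Real.pi : ℂ) / -(Real.pi * I * τ)) ^ 22 = -(τ ^ 22)⁻¹ := by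
    have : (Real.pi : ℂ) / -(Real.pi * I * τ) = I * τ⁻¹ := by
      field_simp
      rw [I_sq]
    rw [this, mul_pow, inv_pow]
    have : I ^ 22 = -1 := by
      rw [show 22 = 2 * 11 by norm_num, pow_mul, I_sq]; norm_num
    rw [this]; ring
  rw [e1]
  congr 1
  apply tsum_congr
  intro y
  rw [mul_comm]
  congr 2
  field_simp
  rw [I_sq]
  ring

end

noncomputable section
open Complex MeasureTheory Filter Topology Asymptotics
open scoped RealInnerProductSpace

theorem normOf_eq (x : E44) : normOf x = ‖x‖ ^ 2 := real_inner_self_eq_norm_sq x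

def latSub {L : Set E44} (huni : IsUnimodularLattice L) : Submodule ℤ E44 where
  carrier := L
  zero_mem' := by
    rw [huni]
    intro y _
    exact ⟨0, by simp⟩
  add_mem' := by
    intro a b ha hb
    rw [huni] at ha hb ⊢
    intro y hy
    obtain ⟨m, hm⟩ := ha y hy
    obtain ⟨n, hn⟩ := hb y hy
    exact ⟨m + n, by rw [inner_add_left, hm, hn]; push_cast; rfl⟩
  smul_mem' := by
    intro c a ha
    rw [huni] at ha ⊢
    intro y hy
    obtain ⟨m, hm⟩ := ha y hy
    refine ⟨c * m, ?_⟩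
    rw [← Int.cast_smul_eq_zsmul ℝ c a, inner_smul_left, hm]
    push_cast; simp

theorem latSub_self {L : Set E44} (huni : IsUnimodularLattice L) (x : E44) :
    x ∈ latSub huni ↔ ∀ y ∈ latSub huni, ∃ m : ℤ, ⟪x, y⟫ = (m : ℝ) := by
  have h : x ∈ latSub huni ↔ x ∈ dualSet L := by
    change x ∈ L ↔ _
    exact iff_of_eq (congrArg (x ∈ ·) huni)
  exact h

theorem latSub_discrete {L : Set E44} (huni : IsUnimodularLattice L) (hmin : HasMinNorm L 4) :
    DiscreteTopology (latSub huni) := by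
  apply discreteTopology_of_isOpen_singleton_zero
  rw [Metric.isOpen_iff]
  intro x hx
  rw [Set.mem_singleton_iff] at hx
  subst hx
  refine ⟨1, one_pos, ?_⟩
  intro y hy
  rw [Set.mem_singleton_iff]
  by_contra hne
  have h1 : (4 : ℝ) ≤ normOf (y : E44) := hmin.2 ⟨y, y.2, by simpa using hne, rfl⟩
  rw [normOf_eq] at h1
  rw [mem_ball_zero_iff] at hy
  have h2 : ‖(y : E44)‖ < 1 := hy
  nlinarith [norm_nonneg (y : E44)]

theorem latSub_isZLattice {L : Set E44} (huni : IsUnimodularLattice L) (hmin : HasMinNorm L 4) :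
    haveI := latSub_discrete huni hmin
    IsZLattice ℝ (latSub huni) := by
  haveI := latSub_discrete huni hmin
  refine ⟨?_⟩
  rw [← Submodule.orthogonal_eq_bot_iff, Submodule.eq_bot_iff]
  intro y hy
  by_contra hne
  have hn : 0 < ‖y‖ := norm_pos_iff.2 hne
  have hmem : (‖y‖⁻¹ • y) ∈ latSub huni := by
    rw [latSub_self]
    intro x hx
    refine ⟨0, ?_⟩
    rw [inner_smul_left]
    have h0 : ⟪x, y⟫ = 0 := (Submodule.mem_orthogonal _ y).1 hy x (Submodule.subset_span hx)
    rw [real_inner_comm, h0]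
    simp
  have h1 : (4 : ℝ) ≤ normOf (‖y‖⁻¹ • y) := hmin.2 ⟨_, hmem, by simp [hne], rfl⟩
  rw [normOf_eq, norm_smul, norm_inv, norm_norm, inv_mul_cancel₀ hn.ne'] at h1
  norm_num at h1

theorem exists_char (Λ : Submodule ℤ E44) [DiscreteTopology Λ] [IsZLattice ℝ Λ]
    (hself : ∀ x : E44, x ∈ Λ ↔ ∀ y ∈ Λ, ∃ m : ℤ, ⟪x, y⟫ = (m : ℝ)) :
    ∃ s : E44, ∀ x ∈ Λ, ∃ m : ℤ, 2 * ⟪x, s⟫ = ‖x‖ ^ 2 + 2 * (m : ℝ) := by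
  classical
  have : Module.Finite ℤ Λ := ZLattice.module_finite ℝ Λ
  have : Module.Free ℤ Λ := ZLattice.module_free ℝ Λ
  let b := Module.Free.chooseBasis ℤ Λ
  let B := b.ofZLatticeBasis ℝ Λ
  let f : E44 →ₗ[ℝ] ℝ := B.constr ℝ (fun i => ‖B i‖ ^ 2 / 2)
  let s : E44 := (InnerProductSpace.toDual ℝ E44).symm (LinearMap.toContinuousLinearMap f)
  have hs : ∀ v, ⟪v, s⟫ = f v := by
    intro v
    rw [real_inner_comm]
    simp only [s]
    rw [InnerProductSpace.toDual_symm_apply]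
    rfl
  refine ⟨s, ?_⟩
  intro x hx
  have hsp : Submodule.span ℤ (Set.range B) = Λ := b.ofZLatticeBasis_span ℝ
  rw [← hsp] at hx
  have hin : ∀ y, y ∈ Submodule.span ℤ (Set.range B) → ∀ z, z ∈ Submodule.span ℤ (Set.range B) → ∃ m : ℤ, ⟪y, z⟫ = (m : ℝ) := by
    intro y hy z hz
    rw [hsp] at hy hz
    exact (hself y).1 hy z hz
  induction hx using Submodule.span_induction with
  | mem x hx =>
    obtain ⟨i, rfl⟩ := hx
    refine ⟨0, ?_⟩
    rw [hs, B.constr_basis ℝ _ i]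
    push_cast; ring
  | zero => exact ⟨0, by simp⟩
  | add y z hy hz ihy ihz =>
    obtain ⟨m, hm⟩ := ihy
    obtain ⟨n, hn⟩ := ihz
    obtain ⟨k, hk⟩ := hin y hy z hz
    refine ⟨m + n - k, ?_⟩
    rw [inner_add_left, norm_add_sq_real, hk]
    push_cast
    linarith
  | smul a y hy ihy =>
    obtain ⟨m, hm⟩ := ihy
    obtain ⟨k, hk⟩ := hin y hy y hy
    rw [real_inner_self_eq_norm_sq] at hk
    obtain ⟨j, hj⟩ := Int.even_mul_succ_self (a - 1)
    refine ⟨a * m - j * k, ?_⟩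
    have hj' : ((a : ℝ) - 1) * a = j + j := by
      have := congrArg (fun t : ℤ => (t : ℝ)) hj
      push_cast at this
      linarith
    rw [← Int.cast_smul_eq_zsmul ℝ a y, inner_smul_left, norm_smul, mul_pow, hk]
    rw [hk] at hm
    simp only [conj_trivial, Real.norm_eq_abs, sq_abs]
    push_cast
    linear_combination (a : ℝ) * hm - (k : ℝ) * hj'

theorem shadow_iff {L : Set E44} (huni : IsUnimodularLattice L) (hodd : IsOddLattice L) {s : E44}
    (hs : ∀ x ∈ latSub huni, ∃ m : ℤ, 2 * ⟪x, s⟫ = ‖x‖ ^ 2 + 2 * (m : ℝ)) (w : E44) :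
    w ∈ shadow L ↔ ∃ x ∈ latSub huni, w = x + s := by
  obtain ⟨x0, hx0, m0, hm0, hn0⟩ := hodd
  rw [normOf_eq] at hn0
  have hinn : ∀ x ∈ latSub huni, ∀ y ∈ latSub huni, ∃ m : ℤ, ⟪x, y⟫ = (m : ℝ) :=
    fun x hx => (latSub_self huni x).1 hx
  have hx0' : x0 ∈ latSub huni := hx0
  have key : ∀ z ∈ dualSet (evenSublattice L), (∃ m : ℤ, ⟪z, x0⟫ = (m : ℝ)) → z ∈ latSub huni := by
    intro z hz hz0
    rw [latSub_self]
    intro y hy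
    obtain ⟨k, hk⟩ := hinn y hy y hy
    rw [real_inner_self_eq_norm_sq] at hk
    rcases Int.even_or_odd k with ⟨j, hj⟩ | ⟨j, hj⟩
    · refine hz y ⟨hy, j, ?_⟩
      rw [normOf_eq, hk, hj]; push_cast; ring
    · obtain ⟨p, hp⟩ := hm0
      obtain ⟨q, hq⟩ := hinn y hy x0 hx0'
      obtain ⟨u, hu⟩ := hz (y - x0) ⟨(latSub huni).sub_mem hy hx0', j + p + 1 - q, by
        rw [normOf_eq, norm_sub_sq_real, hk, hn0, hq, hj, hp]; push_cast; ring⟩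
      obtain ⟨v, hv⟩ := hz0
      refine ⟨u + v, ?_⟩
      rw [inner_sub_right] at hu
      push_cast
      linarith
  have hsd : s ∈ dualSet (evenSublattice L) := by
    rintro y ⟨hy, j, hj⟩
    obtain ⟨m, hm⟩ := hs y hy
    rw [normOf_eq] at hj
    refine ⟨j + m, ?_⟩
    rw [real_inner_comm]
    push_cast
    linarith
  obtain ⟨ms, hms⟩ := hs x0 hx0'
  rw [hn0, real_inner_comm] at hms
  constructor
  · rintro ⟨hw, hwL⟩
    have h2 : (2 : ℤ) • x0 ∈ evenSublattice L := by
      refine ⟨(latSub huni).smul_mem 2 hx0', 2 * m0, ?_⟩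
      rw [normOf_eq, ← Int.cast_smul_eq_zsmul ℝ, norm_smul, mul_pow, hn0]
      push_cast; norm_num; ring
    obtain ⟨k, hk⟩ := hw _ h2
    rw [← Int.cast_smul_eq_zsmul ℝ, inner_smul_right] at hk
    push_cast at hk
    have hko : Odd k := by
      rw [← Int.not_even_iff_odd]
      rintro ⟨j, hj⟩
      apply hwL
      apply key w hw
      refine ⟨j, ?_⟩
      rw [hj] at hk; push_cast at hk; linarith
    refine ⟨w - s, ?_, by simp⟩
    apply key
    · intro y hy
      obtain ⟨p, hp⟩ := hw y hy
      obtain ⟨q, hq⟩ := hsd y hy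
      exact ⟨p - q, by rw [inner_sub_left, hp, hq]; push_cast; rfl⟩
    · obtain ⟨p, hp⟩ := hko
      obtain ⟨q, hq⟩ := hm0
      refine ⟨p - q - ms, ?_⟩
      rw [inner_sub_left]
      rw [hp] at hk
      rw [hq] at hms
      push_cast at hk hms ⊢
      linarith
  · rintro ⟨x, hx, rfl⟩
    refine ⟨?_, ?_⟩
    · intro y hy
      obtain ⟨p, hp⟩ := hinn x hx y hy.1
      obtain ⟨q, hq⟩ := hsd y hy
      exact ⟨p + q, by rw [inner_add_left, hp, hq]; push_cast; rfl⟩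
    · intro hw
      have hsL : s ∈ latSub huni := by
        have := (latSub huni).sub_mem (show x + s ∈ latSub huni from hw) hx
        simpa using this
      obtain ⟨q, hq⟩ := hinn s hsL x0 hx0'
      obtain ⟨p, hp⟩ := hm0
      rw [hq, hp] at hms
      have : 2 * q = 2 * p + 1 + 2 * ms := by
        have h : (2 * (q:ℝ)) = ((2 * p + 1 : ℤ) : ℝ) + 2 * ms := hms
        exact_mod_cast h
      omega
end

noncomputable section
open Complex MeasureTheory Filter Topology Asymptotics
open scoped RealInnerProductSpace

theorem T2_of {F3 F2 : ℂ → ℂ} (T3 : ∀ τ, 0 < τ.im → F3 (τ + 2) = F3 τ)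
    (S3 : ∀ τ, 0 < τ.im → F3 (-1 / τ) = -τ ^ 22 * F3 τ)
    (S4 : ∀ τ, 0 < τ.im → F3 (-1 / τ + 1) = -τ ^ 22 * F2 τ) (τ : ℂ) (hτ : 0 < τ.im) :
    F2 (τ + 1) = - F2 τ := by
  have hτ0 : τ ≠ 0 := by rintro rfl; simp at hτ
  have hσ : 0 < (τ + 1).im := by simpa using hτ
  have hσ0 : τ + 1 ≠ 0 := by intro h; rw [h] at hσ; simp at hσ
  set ρ : ℂ := -1 / τ - 1 with hρ
  have hρi : 0 < ρ.im := by
    have := im_S_pos hτ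
    simpa [hρ] using this
  have hρ0 : ρ ≠ 0 := by intro h; rw [h] at hρi; simp at hρi
  have hρτ : ρ * τ = -(τ + 1) := by
    rw [hρ, sub_mul, div_mul_cancel₀ _ hτ0]; ring
  have h1 : -1 / (τ + 1) + 1 = -1 / ρ := by
    rw [eq_div_iff hρ0]
    have : ρ = -(τ + 1) / τ := by rw [eq_div_iff hτ0, hρτ]
    rw [this]
    field_simp
    ring
  have h2 := S4 (τ + 1) hσ
  rw [h1, S3 ρ hρi, ← T3 ρ hρi, show ρ + 2 = -1 / τ + 1 by rw [hρ]; ring, S4 τ hτ] at h2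
  have h3 : ρ ^ 22 * τ ^ 22 = (τ + 1) ^ 22 := by
    rw [← mul_pow, hρτ]; ring
  have h4 : (τ + 1) ^ 22 * F2 τ = -((τ + 1) ^ 22 * F2 (τ + 1)) := by
    rw [← h3] at h2 ⊢
    linear_combination h2
  have h5 : (τ + 1) ^ 22 ≠ 0 := pow_ne_zero _ hσ0
  apply mul_left_cancel₀ h5
  linear_combination h4

theorem diff_count {ι : Type*} (ν : ι → ℕ) (hs : ∀ r : ℝ, 0 < r → Summable fun x => Real.exp (-r * ν x))
    (τ : ℂ) (hτ : 0 < τ.im) : DifferentiableAt ℂ (fun τ => ∑' x, nome τ ^ ν x) τ := by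
  have hU : IsOpen {z : ℂ | τ.im / 2 < z.im} := isOpen_lt continuous_const Complex.continuous_im
  have hmem : τ ∈ {z : ℂ | τ.im / 2 < z.im} := by
    change τ.im / 2 < τ.im; linarith
  refine (differentiableOn_tsum_of_summable_norm (hs (Real.pi * (τ.im / 2)) (by positivity)) ?_ hU ?_).differentiableAt
    (hU.mem_nhds hmem)
  · intro x z _
    unfold nome
    fun_prop
  · intro x z hz
    have hz' : τ.im / 2 < z.im := hz
    rw [norm_pow, norm_nome, ← Real.exp_nat_mul, Real.exp_le_exp]
    have h1 : Real.pi * (τ.im / 2) ≤ Real.pi * z.im := by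
      apply mul_le_mul_of_nonneg_left hz'.le Real.pi_pos.le
    have h2 : (0 : ℝ) ≤ ν x := Nat.cast_nonneg _
    nlinarith

theorem summable_shift (Λ : Submodule ℤ E44) [DiscreteTopology Λ] [IsZLattice ℝ Λ] (s : E44) {r : ℝ} (hr : 0 < r) :
    Summable fun x : Λ => Real.exp (-r * ‖(x : E44) + s‖ ^ 2) := by
  refine Summable.of_nonneg_of_le (fun _ => (Real.exp_pos _).le) ?_
    ((gauss_summable Λ (r := r / 2) (by linarith)).mul_left (Real.exp (r * ‖s‖ ^ 2)))
  intro x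
  rw [← Real.exp_add, Real.exp_le_exp]
  nlinarith [norm_add_sq_lower (x : E44) s]

theorem finite_fiber {ι : Type*} (ν : ι → ℕ) (hs : Summable fun x => Real.exp (-Real.pi * ν x)) (k : ℕ) :
    {x | ν x = k}.Finite := by
  have h1 := hs.tendsto_cofinite_zero.eventually (gt_mem_nhds (Real.exp_pos (-Real.pi * k)))
  refine h1.subset fun x hx => ?_
  simp only [Set.mem_ofPred_eq, Set.mem_compl_iff, not_lt] at hx ⊢
  rw [hx]

theorem exp_two_pi_int (m : ℤ) : cexp (Real.pi * I * (2 * (m : ℂ))) = 1 := by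
  rw [Complex.exp_eq_one_iff]
  exact ⟨m, by ring⟩

section
variable (Λ : Submodule ℤ E44) (s : E44)

def theta3 (τ : ℂ) : ℂ := ∑' x : Λ, cexp (Real.pi * I * τ * ‖(x : E44)‖ ^ 2)
def theta2 (τ : ℂ) : ℂ := ∑' x : Λ, cexp (Real.pi * I * τ * ‖(x : E44) + s‖ ^ 2)
end

theorem theta_S3 (Λ : Submodule ℤ E44) [DiscreteTopology Λ] [IsZLattice ℝ Λ]
    (hself : ∀ x : E44, x ∈ Λ ↔ ∀ y ∈ Λ, ∃ m : ℤ, ⟪x, y⟫ = (m : ℝ)) (τ : ℂ) (hτ : 0 < τ.im) :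
    theta3 Λ (-1 / τ) = -τ ^ 22 * theta3 Λ τ := by
  have h := lat_poisson Λ hself τ hτ 0
  have hτ0 : τ ≠ 0 := by rintro rfl; simp at hτ
  simp only [add_zero, inner_zero_right, ofReal_zero, mul_zero, Complex.exp_zero, mul_one] at h
  change theta3 Λ τ = _ * theta3 Λ (-1 / τ) at h
  rw [h]
  field_simp

theorem theta_S4 (Λ : Submodule ℤ E44) [DiscreteTopology Λ] [IsZLattice ℝ Λ]
    (hself : ∀ x : E44, x ∈ Λ ↔ ∀ y ∈ Λ, ∃ m : ℤ, ⟪x, y⟫ = (m : ℝ)) {s : E44}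
    (hs : ∀ x ∈ Λ, ∃ m : ℤ, 2 * ⟪x, s⟫ = ‖x‖ ^ 2 + 2 * (m : ℝ)) (τ : ℂ) (hτ : 0 < τ.im) :
    theta3 Λ (-1 / τ + 1) = -τ ^ 22 * theta2 Λ s τ := by
  have h := lat_poisson Λ hself τ hτ s
  have hτ0 : τ ≠ 0 := by rintro rfl; simp at hτ
  change theta2 Λ s τ = _ at h
  have h2 : ∑' y : Λ, cexp (Real.pi * I * (-1 / τ) * ‖(y : E44)‖ ^ 2) *
        cexp (2 * Real.pi * I * (⟪(y : E44), s⟫ : ℝ)) = theta3 Λ (-1 / τ + 1) := by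
    apply tsum_congr
    intro y
    obtain ⟨m, hm⟩ := hs y y.2
    have e : 2 * Real.pi * I * ((⟪(y : E44), s⟫ : ℝ) : ℂ) = Real.pi * I * (‖(y : E44)‖ ^ 2 : ℝ) + Real.pi * I * (2 * (m : ℂ)) := by
      have := congrArg (fun t : ℝ => (t : ℂ)) hm
      push_cast at this ⊢
      linear_combination (Real.pi * I) * this
    rw [e, Complex.exp_add, exp_two_pi_int, mul_one, ← Complex.exp_add]
    congr 1
    push_cast
    ring
  rw [h2] at h
  rw [h]
  field_simp

theorem theta_T3 (Λ : Submodule ℤ E44)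
    (hself : ∀ x : E44, x ∈ Λ ↔ ∀ y ∈ Λ, ∃ m : ℤ, ⟪x, y⟫ = (m : ℝ)) (τ : ℂ) :
    theta3 Λ (τ + 2) = theta3 Λ τ := by
  apply tsum_congr
  intro y
  obtain ⟨m, hm⟩ := (hself y).1 y.2 y y.2
  rw [real_inner_self_eq_norm_sq] at hm
  have hm' : (‖(y : E44)‖ : ℂ) ^ 2 = m := by exact_mod_cast congrArg (fun t : ℝ => (t : ℂ)) hm
  rw [hm', mul_add, add_mul, Complex.exp_add]
  rw [show Real.pi * I * 2 * (m : ℂ) = Real.pi * I * (2 * (m : ℂ)) by ring, exp_two_pi_int, mul_one]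

theorem theta_shift_odd (Λ : Submodule ℤ E44) [DiscreteTopology Λ] [IsZLattice ℝ Λ]
    (hself : ∀ x : E44, x ∈ Λ ↔ ∀ y ∈ Λ, ∃ m : ℤ, ⟪x, y⟫ = (m : ℝ)) {s : E44}
    (hs : ∀ x ∈ Λ, ∃ m : ℤ, 2 * ⟪x, s⟫ = ‖x‖ ^ 2 + 2 * (m : ℝ)) :
    ∀ x : Λ, ∃ k : ℕ, Odd k ∧ ‖(x : E44) + s‖ ^ 2 = (k : ℝ) := by
  have hn : ∀ x : Λ, ∃ k : ℤ, ‖(x : E44) + s‖ ^ 2 = ‖s‖ ^ 2 + 2 * (k : ℝ) := by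
    intro x
    obtain ⟨m, hm⟩ := hs x x.2
    obtain ⟨k, hk⟩ := (hself x).1 x.2 x x.2
    rw [real_inner_self_eq_norm_sq] at hk
    refine ⟨k + m, ?_⟩
    rw [norm_add_sq_real, hm, hk]
    push_cast; ring
  have hT2 := T2_of (F3 := theta3 Λ) (F2 := theta2 Λ s) (fun τ _ => theta_T3 Λ hself τ)
    (theta_S3 Λ hself) (theta_S4 Λ hself hs) I (by simp)
  have hT2' : theta2 Λ s (I + 1) = cexp (Real.pi * I * (‖s‖ ^ 2 : ℝ)) * theta2 Λ s I := by
    unfold theta2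
    rw [← tsum_mul_left]
    apply tsum_congr
    intro x
    obtain ⟨k, hk⟩ := hn x
    have hk' : (‖(x : E44) + s‖ : ℂ) ^ 2 = (‖s‖ ^ 2 : ℝ) + 2 * (k : ℂ) := by
      exact_mod_cast congrArg (fun t : ℝ => (t : ℂ)) hk
    rw [mul_add, add_mul, Complex.exp_add, mul_comm, mul_one]
    congr 1
    rw [hk', mul_add, Complex.exp_add, exp_two_pi_int, mul_one]
  have hne : theta2 Λ s I ≠ 0 := by
    have : theta2 Λ s I = ((∑' x : Λ, Real.exp (-Real.pi * ‖(x : E44) + s‖ ^ 2) : ℝ) : ℂ) := by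
      rw [Complex.ofReal_tsum]
      apply tsum_congr
      intro x
      push_cast
      congr 1
      rw [mul_assoc (Real.pi : ℂ), I_mul_I]; ring
    rw [this]
    have h4 : 0 < ∑' x : Λ, Real.exp (-Real.pi * ‖(x : E44) + s‖ ^ 2) :=
      (summable_shift Λ s Real.pi_pos).tsum_pos (fun _ => (Real.exp_pos _).le) 0 (Real.exp_pos _)
    exact_mod_cast h4.ne'
  rw [hT2'] at hT2
  have hexp : cexp (Real.pi * I * (‖s‖ ^ 2 : ℝ)) = -1 := by
    apply mul_right_cancel₀ hne
    rw [hT2]; ring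
  have hs1 : ∃ n : ℤ, ‖s‖ ^ 2 = 1 + 2 * (n : ℝ) := by
    have h1 : cexp (Real.pi * I * (‖s‖ ^ 2 : ℝ) - Real.pi * I) = 1 := by
      rw [Complex.exp_sub, hexp, Complex.exp_pi_mul_I]; norm_num
    rw [Complex.exp_eq_one_iff] at h1
    obtain ⟨n, hn⟩ := h1
    refine ⟨n, ?_⟩
    have hpi : (Real.pi * I : ℂ) ≠ 0 := mul_ne_zero (by exact_mod_cast Real.pi_ne_zero) I_ne_zero
    have h2 : ((‖s‖ ^ 2 : ℝ) : ℂ) = ((1 + 2 * (n : ℝ) : ℝ) : ℂ) := by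
      apply mul_left_cancel₀ hpi
      push_cast at hn ⊢
      linear_combination hn
    exact_mod_cast h2
  obtain ⟨n, hn1⟩ := hs1
  intro x
  obtain ⟨k, hk⟩ := hn x
  have h0 : (0 : ℝ) ≤ ‖(x : E44) + s‖ ^ 2 := by positivity
  have h1 : ‖(x : E44) + s‖ ^ 2 = ((1 + 2 * (n + k) : ℤ) : ℝ) := by
    rw [hk, hn1]; push_cast; ring
  rw [h1] at h0
  have h2 : 0 ≤ 1 + 2 * (n + k) := by exact_mod_cast h0
  refine ⟨(1 + 2 * (n + k)).toNat, ⟨(n + k).toNat, by omega⟩, ?_⟩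
  rw [h1]
  have : (((1 + 2 * (n + k)).toNat : ℤ)) = 1 + 2 * (n + k) := Int.toNat_of_nonneg h2
  exact_mod_cast this.symm

theorem cexp_nome (τ : ℂ) {a : ℝ} {k : ℕ} (h : a ^ 2 = (k : ℝ)) :
    cexp (Real.pi * I * τ * (a : ℂ) ^ 2) = nome τ ^ k := by
  unfold nome
  have h' : (a : ℂ) ^ 2 = k := by exact_mod_cast congrArg (fun t : ℝ => (t : ℂ)) h
  rw [← Complex.exp_nat_mul, h']
  congr 1
  ring

theorem kissing_core {L : Set (EuclideanSpace ℝ (Fin 44))}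
    (huni : IsUnimodularLattice L) (hodd : IsOddLattice L) (hmin : HasMinNorm L 4) :
    numVecsOfNorm L 4 = 6600 ↔ HasSigma L 20 := by
  have i1 := latSub_discrete huni hmin
  have i2 := latSub_isZLattice huni hmin
  have hself := latSub_self huni
  set Λ := latSub huni with hΛ
  obtain ⟨s, hs⟩ := exists_char Λ hself
  have hν3 : ∀ x : Λ, ∃ k : ℕ, ‖(x : E44)‖ ^ 2 = (k : ℝ) := by
    intro x
    obtain ⟨k, hk⟩ := (hself x).1 x.2 x x.2
    rw [real_inner_self_eq_norm_sq] at hk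
    have h0 : (0 : ℝ) ≤ k := by rw [← hk]; positivity
    have h1 : 0 ≤ k := by exact_mod_cast h0
    refine ⟨k.toNat, ?_⟩
    rw [hk]
    exact_mod_cast (Int.toNat_of_nonneg h1).symm
  choose ν3 hν3 using hν3
  choose ν2 hoddB hν2 using theta_shift_odd Λ hself hs
  have hF3 : theta3 Λ = fun τ => ∑' x, nome τ ^ ν3 x := by
    funext τ
    exact tsum_congr fun x => cexp_nome τ (hν3 x)
  have hF2 : theta2 Λ s = fun τ => ∑' x, nome τ ^ ν2 x := by
    funext τ
    exact tsum_congr fun x => cexp_nome τ (hν2 x)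
  have hs3 : ∀ r : ℝ, 0 < r → Summable fun x => Real.exp (-r * ν3 x) := by
    intro r hr
    simpa only [hν3] using gauss_summable Λ hr
  have hs2 : ∀ r : ℝ, 0 < r → Summable fun x => Real.exp (-r * ν2 x) := by
    intro r hr
    simpa only [hν2] using summable_shift Λ s hr
  have hpair : ThetaPair (theta3 Λ) (theta2 Λ s) := by
    refine ⟨?_, ?_, fun τ _ => theta_T3 Λ hself τ, theta_S3 Λ hself, theta_S4 Λ hself hs, ?_⟩
    · rw [hF3]; exact diff_count ν3 hs3
    · rw [hF2]; exact diff_count ν2 hs2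
    · exact T2_of (fun τ _ => theta_T3 Λ hself τ) (theta_S3 Λ hself) (theta_S4 Λ hself hs)
  have a3 := Asy.of_count ν3 (hs3 _ Real.pi_pos)
  have a2 := Asy.of_count ν2 (hs2 _ Real.pi_pos)
  rw [← hF3] at a3
  rw [← hF2] at a2
  have hz : ∀ x : Λ, ν3 x < 4 → x = 0 := by
    intro x hx
    by_contra hne
    have h1 : (4 : ℝ) ≤ normOf (x : E44) := hmin.2 ⟨x, x.2, by simpa using hne, rfl⟩
    rw [normOf_eq, hν3] at h1
    have h2 : 4 ≤ ν3 x := by exact_mod_cast h1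
    omega
  have hz0 : ν3 0 = 0 := by
    have := hν3 0
    simp at this
    exact_mod_cast this.symm
  have c0 : Set.ncard {x | ν3 x = 0} = 1 := by
    rw [Set.ncard_eq_one]
    refine ⟨0, ?_⟩
    ext x
    simp only [Set.mem_ofPred_eq, Set.mem_singleton_iff]
    constructor
    · intro h; exact hz x (by omega)
    · rintro rfl; exact hz0
  have cz : ∀ k, 0 < k → k < 4 → Set.ncard {x | ν3 x = k} = 0 := by
    intro k hk hk4
    have : {x | ν3 x = k} = ∅ := by
      ext x
      simp only [Set.mem_ofPred_eq, Set.mem_empty_iff_false, iff_false]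
      intro h
      have := hz x (by omega)
      rw [this, hz0] at h
      omega
    rw [this, Set.ncard_empty]
  have ce : ∀ k, Even k → Set.ncard {x | ν2 x = k} = 0 := by
    intro k hk
    have : {x | ν2 x = k} = ∅ := by
      ext x
      simp only [Set.mem_ofPred_eq, Set.mem_empty_iff_false, iff_false]
      intro h
      have := hoddB x
      rw [h] at this
      exact (Nat.not_odd_iff_even.2 hk) this
    rw [this, Set.ncard_empty]
  rw [c0, cz 1 (by norm_num) (by norm_num), cz 2 (by norm_num) (by norm_num), cz 3 (by norm_num) (by norm_num)] at a3
  rw [ce 0 (by decide), ce 2 (by decide), ce 4 (by decide), ce 6 (by decide)] at a2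
  simp only [Nat.cast_zero, Nat.cast_one] at a3 a2
  have r1 := hpair.rel1 a3 a2
  have hA4 : Set.ncard {x | ν3 x = 4} = numVecsOfNorm L 4 := by
    unfold numVecsOfNorm
    rw [← Set.ncard_image_of_injective _ (Subtype.val_injective : Function.Injective (Subtype.val : Λ → E44))]
    congr 1
    ext x
    simp only [Set.mem_image, Set.mem_ofPred_eq]
    constructor
    · rintro ⟨y, hy, rfl⟩
      refine ⟨y.2, ?_⟩
      rw [normOf_eq, hν3, hy]; norm_num
    · rintro ⟨hx, hx4⟩
      refine ⟨⟨x, hx⟩, ?_, rfl⟩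
      have := hν3 ⟨x, hx⟩
      rw [normOf_eq] at hx4
      rw [hx4] at this
      exact_mod_cast this.symm
  rw [hA4] at r1
  have r1' : numVecsOfNorm L 4 = 6600 + 1216 * Set.ncard {x | ν2 x = 1} + 16 * Set.ncard {x | ν2 x = 3} := by
    exact_mod_cast r1
  have hsh := shadow_iff huni hodd hs
  have hfib : ∀ k, Set.ncard {x | ν2 x = k} = 0 → ∀ x, ν2 x ≠ k := by
    intro k hk x hx
    have hfin := finite_fiber ν2 (hs2 _ Real.pi_pos) k
    rw [Set.ncard_eq_zero hfin] at hk
    have : x ∈ {x | ν2 x = k} := hx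
    rw [hk] at this
    exact this
  constructor
  · intro h
    have b1 : Set.ncard {x | ν2 x = 1} = 0 := by omega
    have b3 : Set.ncard {x | ν2 x = 3} = 0 := by omega
    rw [b1, b3] at a2
    simp only [Nat.cast_zero] at a2
    have r2 := hpair.rel2 a3 a2
    refine ⟨5, ⟨?_, ?_⟩, by norm_num⟩
    · have : Set.ncard {x | ν2 x = 5} ≠ 0 := by
        intro h0
        rw [h0] at r2
        norm_num at r2
      obtain ⟨x, hx⟩ := Set.nonempty_of_ncard_ne_zero this
      have hx' : ν2 x = 5 := hx
      refine ⟨(x : E44) + s, (hsh _).2 ⟨x, x.2, rfl⟩, ?_⟩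
      rw [normOf_eq, hν2, hx']; norm_num
    · rintro r ⟨w, hw, rfl⟩
      obtain ⟨x, hx, rfl⟩ := (hsh w).1 hw
      have h1 := hfib 1 b1 ⟨x, hx⟩
      have h3 := hfib 3 b3 ⟨x, hx⟩
      have ho := hoddB ⟨x, hx⟩
      have hv := hν2 ⟨x, hx⟩
      rw [normOf_eq, hv]
      have : 5 ≤ ν2 ⟨x, hx⟩ := by
        obtain ⟨j, hj⟩ := ho
        omega
      exact_mod_cast this
  · rintro ⟨r, ⟨_, hr⟩, hr20⟩
    have hr5 : r = 5 := by linarith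
    subst hr5
    have hge : ∀ x, 5 ≤ ν2 x := by
      intro x
      have h1 : (5 : ℝ) ≤ normOf ((x : E44) + s) := hr ⟨_, (hsh _).2 ⟨x, x.2, rfl⟩, rfl⟩
      rw [normOf_eq, hν2] at h1
      exact_mod_cast h1
    have b : ∀ k, k < 5 → Set.ncard {x | ν2 x = k} = 0 := by
      intro k hk
      have : {x | ν2 x = k} = ∅ := by
        ext x
        simp only [Set.mem_ofPred_eq, Set.mem_empty_iff_false, iff_false]
        have := hge x
        omega
      rw [this, Set.ncard_empty]
    rw [b 1 (by norm_num), b 3 (by norm_num)] at r1'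
    omega
end

theorem kissing_number_dim44 {L : Set (EuclideanSpace ℝ (Fin 44))}
    (huni : IsUnimodularLattice L) (hodd : IsOddLattice L) (hmin : HasMinNorm L 4) :
    numVecsOfNorm L 4 = 6600 ↔ HasSigma L 20 := by
  exact kissing_core huni hodd hmin
end
end

section
/- There exists an odd unimodular lattice L in dimension 44 having minimum norm 4 with σ(L) = 20. -/
open scoped RealInnerProductSpace

noncomputable section

open Matrix

/-- Packed generator rows: two bits per coordinate, entry plus one. -/
def rowsN : List ℕ :=
  [201393184349132201097428990,
   127661331826641800461112659,
   103545736130037361932588389,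
   199894699146528979859887543,
   124097119908127058277259007,
   127360643790237668334722015,
   104748478466830935324454751,
   204717439822285137085054303,
   104692903420020365420590431,
   205090782551215908973674487]

/-- The rows modulo 2, as bit masks. -/
def masksN : List ℕ :=
  [14977913232385,
   7292642108418,
   956567510020,
   13341217598472,
   6430306389008,
   6799091762208,
   1938168255552,
   15512731630720,
   1825306963200,
   16280756768256]

/-- The columns modulo 2, as bit masks. -/
def colsN : List ℕ :=
  [1, 2, 4, 8, 16, 32, 64, 128, 256, 512, 1023, 925, 197, 394, 788, 471, 942, 163, 326, 652, 743, 561, 486, 972, 103, 206, 412, 824, 399, 798, 451, 902, 243, 749, 549, 949, 149, 298, 596, 855, 337, 674, 699, 649]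

/-- Generator entries: a `ℤ/4` lift of a doubly even binary `[44,10]` code. -/
def Gn (i k : ℕ) : ℤ := (((rowsN.getD i 0) >>> (2 * k)) % 4 : ℕ) - 1

def G : Matrix (Fin 10) (Fin 44) ℤ := fun i k => Gn i k

def E : Matrix (Fin 10) (Fin 10) ℤ := fun i j =>
  if i = j then (∑ k, G i k * G i k) / 8 else if i < j then (∑ k, G i k * G j k) / 4 else 0

def tt : Fin 10 → ℤ := fun i => (∑ k, G i k) / 4

def qb : Fin 44 → ℤ := fun l => if l.val ≤ 10 then 1 else 0

def Q : Matrix (Fin 10) (Fin 44) ℤ := fun i l => qb l + if l.val = i.val then 1 else 0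

def w5 : Fin 44 → ℤ := fun l =>
  if l.val = 0 ∨ l.val = 1 ∨ l.val = 3 ∨ l.val = 12 ∨ l.val = 25 then 1 else 0

lemma G_gram : ∀ i j, ∑ k, G i k * G j k = 4 * (E i j + E j i) := by decide +kernel

lemma G_sum : ∀ i, ∑ k, G i k = 4 * tt i := by decide +kernel

lemma G_Q : ∀ i j, (∑ k, G i k * Q j k - if i = j then 1 else 0) % 2 = 0 := by decide +kernel

lemma G_qb : ∀ i, (∑ k, G i k * qb k) % 2 = 0 := by decide +kernel

lemma one_Q : ∀ j, (∑ k, Q j k) % 2 = 0 := by decide +kernel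

lemma one_qb : (∑ k, qb k) % 2 = 1 := by decide +kernel

lemma G_w5 : ∀ i, (∑ k, G i k * w5 k) % 2 = 0 := by decide +kernel

lemma w5_sum : ∑ k, w5 k = 5 := by decide +kernel

lemma w5_sq : ∑ k, w5 k * w5 k = 5 := by decide +kernel

lemma mask_spec : ∀ i : Fin 10, ∀ k : Fin 44,
    ((masksN.getD i 0).testBit k = true ↔ Gn i k % 2 = 1) := by decide +kernel

lemma col_spec : ∀ i : Fin 10, ∀ k : Fin 44,
    ((colsN.getD k 0).testBit i = true ↔ G i k % 2 = 1) := by decide +kernel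

lemma col_lt : ∀ k : Fin 44, colsN.getD k 0 < 2 ^ 10 := by decide +kernel

lemma col_inj : ∀ x y : Fin 44, x ≠ y → colsN.getD x 0 ≠ colsN.getD y 0 := by decide +kernel

lemma col_three : ∀ x y z : Fin 44,
    (colsN.getD x 0) ^^^ (colsN.getD y 0) ≠ colsN.getD z 0 := by decide +kernel

/-- Weight of the low 44 bits. -/
def wt44 : ℕ → ℕ → ℕ
  | 0, _ => 0
  | n + 1, w => (w >>> n) % 2 + wt44 n w

/-- Check all words of a coset. -/
def chk : ℕ → ℕ → Bool
  | 0, w => w == 0 || Nat.ble 16 (wt44 44 w)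
  | n + 1, w => chk n w && chk n (w ^^^ masksN.getD n 0)

lemma chk_zero : chk 10 0 = true := by decide +kernel

lemma chk_one : chk 10 (2 ^ 44 - 1) = true := by decide +kernel

lemma wt44_eq (n w : ℕ) :
    wt44 n w = ∑ k ∈ Finset.range n, (if w.testBit k = true then 1 else 0) := by
  induction n with
  | zero => simp [wt44]
  | succ n ih =>
    rw [Finset.sum_range_succ, wt44, ih, add_comm]
    congr 1
    rw [Nat.testBit_eq_decide_div_mod_eq, Nat.shiftRight_eq_div_pow]
    have : w / 2 ^ n % 2 = 0 ∨ w / 2 ^ n % 2 = 1 := by omega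
    rcases this with h | h <;> simp [h]

lemma chk_spec (n : ℕ) : ∀ (w : ℕ), n ≤ 10 → chk n w = true → ∀ a : ℕ → ℤ,
    ∃ w' : ℕ, (w' = 0 ∨ 16 ≤ wt44 44 w') ∧ ∀ k < 44, (w'.testBit k = true ↔
      ((if w.testBit k = true then 1 else 0) + ∑ i ∈ Finset.range n, a i * Gn i k) % 2 = 1) := by
  induction n with
  | zero =>
    intro w _ h a
    refine ⟨w, ?_, ?_⟩
    · simpa [chk] using h
    · intro k _
      by_cases hk : w.testBit k = true <;> simp [hk]
  | succ n ih =>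
    intro w hn h a
    simp only [chk, Bool.and_eq_true] at h
    rcases Int.emod_two_eq_zero_or_one (a n) with ha | ha
    · obtain ⟨w', h1, h2⟩ := ih w (by omega) h.1 a
      refine ⟨w', h1, fun k hk => ?_⟩
      rw [h2 k hk, Finset.sum_range_succ]
      have : (a n * Gn n k) % 2 = 0 := by rw [Int.mul_emod, ha]; simp
      omega
    · obtain ⟨w', h1, h2⟩ := ih _ (by omega) h.2 a
      refine ⟨w', h1, fun k hk => ?_⟩
      rw [h2 k hk, Finset.sum_range_succ]
      have : (a n * Gn n k) % 2 = Gn n k % 2 := by rw [Int.mul_emod, ha]; simp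
      have hm := mask_spec ⟨n, by omega⟩ ⟨k, hk⟩
      simp only at hm
      rw [Nat.testBit_xor]
      generalize (masksN.getD n 0).testBit k = p at hm
      generalize w.testBit k = q
      generalize Gn n k = r at *
      cases p <;> cases q <;> simp at hm ⊢ <;> omega

/-- The integer vector `aG + b1 + 2u`. -/
def Z (a : Fin 10 → ℤ) (b : ℤ) (u : Fin 44 → ℤ) : Fin 44 → ℤ :=
  fun k => ∑ i, a i * G i k + b + 2 * u k

lemma Z_eq (a : Fin 10 → ℤ) (b : ℤ) (u : Fin 44 → ℤ) :
    Z a b u = a ᵥ* G + b • (1 : Fin 44 → ℤ) + (2 : ℤ) • u := by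
  funext k
  simp [Z, Matrix.vecMul, dotProduct]

lemma G_gram' : G * Gᵀ = (4 : ℤ) • (E + Eᵀ) := by
  ext i j
  simpa [Matrix.mul_apply] using G_gram i j

lemma G_one : G *ᵥ 1 = (4 : ℤ) • tt := by
  ext i
  simpa [Matrix.mulVec, dotProduct] using G_sum i

lemma Z_dot (a : Fin 10 → ℤ) (b : ℤ) (u w : Fin 44 → ℤ) :
    Z a b u ⬝ᵥ w = a ⬝ᵥ (G *ᵥ w) + b * (1 ⬝ᵥ w) + 2 * (u ⬝ᵥ w) := by
  rw [Z_eq, add_dotProduct, add_dotProduct, smul_dotProduct, smul_dotProduct,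
    Matrix.dotProduct_mulVec]
  simp

lemma G_Z (a : Fin 10 → ℤ) (b : ℤ) (u : Fin 44 → ℤ) :
    G *ᵥ Z a b u = (4 : ℤ) • ((E + Eᵀ) *ᵥ a) + (4 * b) • tt + (2 : ℤ) • (G *ᵥ u) := by
  rw [Z_eq, Matrix.mulVec_add, Matrix.mulVec_add, Matrix.mulVec_smul, Matrix.mulVec_smul, G_one,
    ← Matrix.mulVec_transpose, Matrix.mulVec_mulVec, G_gram', Matrix.smul_mulVec, smul_smul,
    mul_comm b 4]

lemma one_Z (a : Fin 10 → ℤ) (b : ℤ) (u : Fin 44 → ℤ) :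
    (1 : Fin 44 → ℤ) ⬝ᵥ Z a b u = 4 * (a ⬝ᵥ tt) + 44 * b + 2 * (1 ⬝ᵥ u) := by
  rw [dotProduct_comm, Z_dot, G_one, dotProduct_smul, dotProduct_comm u]
  have : (1 : Fin 44 → ℤ) ⬝ᵥ 1 = 44 := by simp
  rw [this, smul_eq_mul]
  ring

lemma sq_parity (u : Fin 44 → ℤ) : ∃ c, u ⬝ᵥ u = 1 ⬝ᵥ u + 2 * c := by
  have : (2 : ℤ) ∣ u ⬝ᵥ u - 1 ⬝ᵥ u := by
    rw [← sub_dotProduct]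
    apply Finset.dvd_sum
    intro k _
    simp only [Pi.sub_apply, Pi.one_apply]
    have := Int.even_mul_pred_self (u k)
    rw [mul_comm] at this
    exact this.two_dvd
  obtain ⟨c, hc⟩ := this
  exact ⟨c, by linarith⟩

/-- All inner products with the rows of `G` are even. -/
def Ev (u : Fin 44 → ℤ) : Prop := ∀ i, Even ((G *ᵥ u) i)

lemma Ev.exists {u : Fin 44 → ℤ} (h : Ev u) : ∃ c : Fin 10 → ℤ, G *ᵥ u = (2 : ℤ) • c := by
  choose c hc using h
  refine ⟨c, funext fun i => ?_⟩
  rw [hc i]; simp; ring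

lemma norm_Z (a : Fin 10 → ℤ) (b : ℤ) (u : Fin 44 → ℤ) (h : Ev u) :
    ∃ c, Z a b u ⬝ᵥ Z a b u = 8 * c + 4 * (b + b * (1 ⬝ᵥ u) + 1 ⬝ᵥ u) := by
  obtain ⟨c, hc⟩ := h.exists
  obtain ⟨d, hd⟩ := sq_parity u
  have hE : a ⬝ᵥ ((E + Eᵀ) *ᵥ a) = 2 * (a ⬝ᵥ (E *ᵥ a)) := by
    rw [Matrix.add_mulVec, dotProduct_add, Matrix.mulVec_transpose, ← dotProduct_comm (a ᵥ* E),
      ← Matrix.dotProduct_mulVec]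
    ring
  have hb : ∃ e, b * b = b + 2 * e := by
    obtain ⟨e, he⟩ := Int.even_mul_pred_self b
    exact ⟨e, by linarith⟩
  obtain ⟨e, he⟩ := hb
  have h1 : u ⬝ᵥ Z a b u = 2 * (a ⬝ᵥ c) + b * (1 ⬝ᵥ u) + 2 * (u ⬝ᵥ u) := by
    rw [dotProduct_comm, Z_dot, hc, dotProduct_smul, smul_eq_mul]
  have h2 : Z a b u ⬝ᵥ Z a b u = 8 * (a ⬝ᵥ (E *ᵥ a)) + 8 * b * (a ⬝ᵥ tt) + 8 * (a ⬝ᵥ c)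
      + 44 * (b * b) + 4 * b * (1 ⬝ᵥ u) + 4 * (u ⬝ᵥ u) := by
    rw [Z_dot, one_Z, G_Z, h1, hc]
    simp only [dotProduct_add, dotProduct_smul, hE, smul_eq_mul]
    ring
  refine ⟨a ⬝ᵥ (E *ᵥ a) + b * (a ⬝ᵥ tt) + a ⬝ᵥ c + 11 * e + 5 * b + d, ?_⟩
  rw [h2, he, hd]
  ring

lemma Z_Z (a a' : Fin 10 → ℤ) (b b' : ℤ) (u u' : Fin 44 → ℤ) (h : Ev u) (h' : Ev u')
    (hs : Even (1 ⬝ᵥ u)) (hs' : Even (1 ⬝ᵥ u')) : ∃ c, Z a b u ⬝ᵥ Z a' b' u' = 4 * c := by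
  obtain ⟨c, hc⟩ := h.exists
  obtain ⟨c', hc'⟩ := h'.exists
  obtain ⟨s, hs⟩ := hs
  obtain ⟨s', hs'⟩ := hs'
  have h1 : u ⬝ᵥ Z a' b' u' = 2 * (a' ⬝ᵥ c) + b' * (s + s) + 2 * (u' ⬝ᵥ u) := by
    rw [dotProduct_comm, Z_dot, hc, dotProduct_smul, smul_eq_mul, hs]
  refine ⟨a ⬝ᵥ ((E + Eᵀ) *ᵥ a') + b' * (a ⬝ᵥ tt) + a ⬝ᵥ c' + b * (a' ⬝ᵥ tt + 11 * b' + s')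
    + a' ⬝ᵥ c + b' * s + u' ⬝ᵥ u, ?_⟩
  rw [Z_dot, one_Z, G_Z, h1, hc', hs']
  simp only [dotProduct_add, dotProduct_smul, smul_eq_mul]
  ring

/-- The code with generator matrix `G` has dual distance at least 4. -/
lemma short_vec (w : Fin 44 → ℤ) (hw : w ≠ 0) (h : Ev w) : 4 ≤ w ⬝ᵥ w := by
  by_contra hlt
  push Not at hlt
  have hle : ∀ k, w k * w k ≤ w ⬝ᵥ w := fun k =>
    Finset.single_le_sum (f := fun k => w k * w k) (fun i _ => mul_self_nonneg _)
      (Finset.mem_univ k)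
  have hk : ∀ k, w k = 0 ∨ w k = 1 ∨ w k = -1 := by
    intro k
    have := hle k
    have h1 : w k < 2 := by nlinarith
    have h2 : -2 < w k := by nlinarith
    omega
  set S := Finset.univ.filter (fun k => w k ≠ 0) with hS
  have hcard : (S.card : ℤ) = w ⬝ᵥ w := by
    rw [hS, Finset.card_filter, dotProduct]
    push_cast
    apply Finset.sum_congr rfl
    intro k _
    rcases hk k with h | h | h <;> simp [h]
  have hpar : ∀ i, (∑ k ∈ S, G i k) % 2 = 0 := by
    intro i
    have h1 : (2 : ℤ) ∣ (G *ᵥ w) i - ∑ k ∈ S, G i k := by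
      rw [hS, Finset.sum_filter, Matrix.mulVec, dotProduct, ← Finset.sum_sub_distrib]
      apply Finset.dvd_sum
      intro k _
      rcases hk k with h | h | h
      · simp [h]
      · simp [h]
      · refine ⟨-G i k, ?_⟩
        simp [h]; ring
    have h2 := (h i).two_dvd
    omega
  have hne : S.Nonempty := by
    by_contra hemp
    rw [Finset.not_nonempty_iff_eq_empty] at hemp
    apply hw
    funext k
    by_contra hk0
    have : k ∈ S := by simp [hS]; exact hk0
    simp [hemp] at this
  have hpos : 0 < S.card := hne.card_pos
  have hS3 : S.card < 4 := by omega
  have hbig : ∀ (k : Fin 44) (j : ℕ), 10 ≤ j → (colsN.getD k 0).testBit j = false := by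
    intro k j hj
    apply Nat.testBit_lt_two_pow
    exact lt_of_lt_of_le (col_lt k) (Nat.pow_le_pow_right (by norm_num) hj)
  have : S.card = 1 ∨ S.card = 2 ∨ S.card = 3 := by omega
  rcases this with h1 | h1 | h1
  · obtain ⟨x, hx⟩ := Finset.card_eq_one.mp h1
    rw [hx] at hpar
    simp only [Finset.sum_singleton] at hpar
    apply col_three x x x
    apply Nat.eq_of_testBit_eq
    intro j
    rcases lt_or_ge j 10 with hj | hj
    · have e1 := col_spec ⟨j, hj⟩ x
      have e2 := hpar ⟨j, hj⟩
      simp only [e2] at e1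
      simp at e1
      simp [e1]
    · simp only [Nat.testBit_xor, hbig _ _ hj, Bool.xor_false]
  · obtain ⟨x, y, hxy, hx⟩ := Finset.card_eq_two.mp h1
    rw [hx] at hpar
    simp only [Finset.sum_pair hxy] at hpar
    apply col_inj x y hxy
    apply Nat.eq_of_testBit_eq
    intro j
    rcases lt_or_ge j 10 with hj | hj
    · have e1 := col_spec ⟨j, hj⟩ x
      have e2 := col_spec ⟨j, hj⟩ y
      have e3 := hpar ⟨j, hj⟩
      rw [Bool.eq_iff_iff]
      simp only at e1 e2
      rw [e1, e2]
      omega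
    · simp only [hbig _ _ hj]
  · obtain ⟨x, y, z, hxy, hxz, hyz, hx⟩ := Finset.card_eq_three.mp h1
    have hsum : ∀ i, ∑ k ∈ S, G i k = G i x + (G i y + G i z) := by
      intro i
      rw [hx, Finset.sum_insert (by simp [hxy, hxz]), Finset.sum_pair hyz]
    apply col_three x y z
    apply Nat.eq_of_testBit_eq
    intro j
    rcases lt_or_ge j 10 with hj | hj
    · have e1 := col_spec ⟨j, hj⟩ x
      have e2 := col_spec ⟨j, hj⟩ y
      have e4 := col_spec ⟨j, hj⟩ z
      have e3 := hpar ⟨j, hj⟩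
      rw [hsum] at e3
      simp only at e1 e2 e4
      rw [Nat.testBit_xor]
      generalize (colsN.getD x 0).testBit j = p at *
      generalize (colsN.getD y 0).testBit j = q at *
      generalize (colsN.getD z 0).testBit j = r at *
      cases p <;> cases q <;> cases r <;> simp at * <;> omega
    · simp only [Nat.testBit_xor, hbig _ _ hj, Bool.xor_false]

lemma word_spec (a : Fin 10 → ℤ) (b : ℤ) (u : Fin 44 → ℤ) :
    ∃ w' : ℕ, (w' = 0 ∨ 16 ≤ wt44 44 w') ∧
      ∀ k : Fin 44, (w'.testBit k = true ↔ Z a b u k % 2 = 1) := by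
  let a' : ℕ → ℤ := fun i => if h : i < 10 then a ⟨i, h⟩ else 0
  have hsum : ∀ k : Fin 44, ∑ i ∈ Finset.range 10, a' i * Gn i k = ∑ i, a i * G i k := by
    intro k
    rw [← Fin.sum_univ_eq_sum_range (fun i => a' i * Gn i k) 10]
    apply Finset.sum_congr rfl
    intro i _
    simp [a', G]
  rcases Int.emod_two_eq_zero_or_one b with hb | hb
  · obtain ⟨w', h1, h2⟩ := chk_spec 10 0 le_rfl chk_zero a'
    refine ⟨w', h1, fun k => ?_⟩
    rw [h2 k k.2, hsum, Z]
    simp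
    omega
  · obtain ⟨w', h1, h2⟩ := chk_spec 10 _ le_rfl chk_one a'
    refine ⟨w', h1, fun k => ?_⟩
    rw [h2 k k.2, hsum, Z, Nat.testBit_two_pow_sub_one]
    simp
    omega

lemma min16 (a : Fin 10 → ℤ) (b : ℤ) (u : Fin 44 → ℤ) (h : Ev u) (hne : Z a b u ≠ 0) :
    16 ≤ Z a b u ⬝ᵥ Z a b u := by
  obtain ⟨w', h1, h2⟩ := word_spec a b u
  rcases h1 with h1 | h1
  · subst h1
    have hev : ∀ k, ∃ c, Z a b u k = 2 * c := by
      intro k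
      have := h2 k
      simp at this
      exact ⟨Z a b u k / 2, by omega⟩
    choose w hw using hev
    have hZ : Z a b u = (2 : ℤ) • w := by
      funext k; simp [hw k]
    have hEv : Ev w := by
      intro i
      have h3 := congrFun (G_Z a b u) i
      rw [hZ, Matrix.mulVec_smul] at h3
      simp only [Pi.add_apply, Pi.smul_apply, smul_eq_mul] at h3
      obtain ⟨c, hc⟩ := h i
      rw [Int.even_iff]
      rw [hc] at h3
      have : 4 * b * tt i = 4 * (b * tt i) := by ring
      omega
    have hw0 : w ≠ 0 := by
      rintro rfl
      exact hne (by rw [hZ]; simp)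
    have := short_vec w hw0 hEv
    rw [hZ, smul_dotProduct, dotProduct_smul, smul_eq_mul, smul_eq_mul]
    linarith
  · rw [wt44_eq, ← Fin.sum_univ_eq_sum_range (fun k => if w'.testBit k = true then 1 else 0) 44]
      at h1
    have h3 : (16 : ℤ) ≤ ∑ k : Fin 44, (if w'.testBit k = true then 1 else 0) := by
      exact_mod_cast h1
    refine h3.trans (Finset.sum_le_sum fun k _ => ?_)
    split_ifs with hk
    · have := (h2 k).1 hk
      have h0 : Z a b u k ≠ 0 := by omega
      have := mul_self_pos.mpr h0
      omega
    · exact mul_self_nonneg _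

/-- The vector with coordinates `w k / 2`. -/
def hvec (w : Fin 44 → ℤ) : EuclideanSpace ℝ (Fin 44) := WithLp.toLp 2 (fun k => (w k : ℝ) / 2)

/-- `x` is half the integer vector `z`. -/
def Half (x : EuclideanSpace ℝ (Fin 44)) (z : Fin 44 → ℤ) : Prop := ∀ k, 2 * x k = (z k : ℝ)

lemma half_vec (w : Fin 44 → ℤ) : Half (hvec w) w := by
  intro k
  simp [hvec]
  ring

lemma Half.inner {x y : EuclideanSpace ℝ (Fin 44)} {z z' : Fin 44 → ℤ} (hx : Half x z)
    (hy : Half y z') : 4 * ⟪x, y⟫ = ((z ⬝ᵥ z' : ℤ) : ℝ) := by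
  rw [PiLp.inner_apply, Finset.mul_sum, dotProduct]
  push_cast
  apply Finset.sum_congr rfl
  intro k _
  rw [← hx k, ← hy k]
  simp
  ring

lemma Half.int_iff {x y : EuclideanSpace ℝ (Fin 44)} {z z' : Fin 44 → ℤ} (hx : Half x z)
    (hy : Half y z') : (∃ m : ℤ, ⟪x, y⟫ = (m : ℝ)) ↔ ∃ m : ℤ, z ⬝ᵥ z' = 4 * m := by
  have h := hx.inner hy
  constructor
  · rintro ⟨m, hm⟩
    refine ⟨m, ?_⟩
    rw [hm] at h
    exact_mod_cast h.symm
  · rintro ⟨m, hm⟩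
    refine ⟨m, ?_⟩
    rw [hm] at h
    push_cast at h
    linarith

/-- The lattice. -/
def LL : Set (EuclideanSpace ℝ (Fin 44)) :=
  {x | ∃ a b u, Ev u ∧ Even (1 ⬝ᵥ u) ∧ Half x (Z a b u)}

lemma vec_mem {a b u} (h : Ev u) (hs : Even (1 ⬝ᵥ u)) : hvec (Z a b u) ∈ LL :=
  ⟨a, b, u, h, hs, half_vec _⟩

lemma Ev_zero : Ev 0 := by intro i; simp

lemma Z_even (u : Fin 44 → ℤ) : Z 0 0 u = (2 : ℤ) • u := by
  rw [Z_eq]; simp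

lemma vec_even_mem {a b u} (h : Ev u) (hs : Even (1 ⬝ᵥ u)) (hb : Even b) :
    hvec (Z a b u) ∈ evenSublattice LL := by
  refine ⟨vec_mem h hs, ?_⟩
  obtain ⟨c, hc⟩ := norm_Z a b u h
  obtain ⟨d, hd⟩ := hb
  obtain ⟨e, he⟩ := hs
  refine ⟨c + d + d * (e + e) + e, ?_⟩
  have := (half_vec (Z a b u)).inner (half_vec (Z a b u))
  rw [hc, he] at this
  rw [normOf]
  have hd' : (b : ℝ) = d + d := by exact_mod_cast hd
  push_cast at this ⊢
  rw [hd'] at this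
  linarith

lemma dual_rep (x : EuclideanSpace ℝ (Fin 44))
    (h : ∀ u, Ev u → Even (1 ⬝ᵥ u) → ∃ m : ℤ, ⟪x, hvec (Z 0 0 u)⟫ = (m : ℝ)) :
    ∃ a b u, Half x (Z a b u) := by
  have h1 : ∀ k, ∃ m : ℤ, 2 * x k = (m : ℝ) := by
    intro k
    obtain ⟨m, hm⟩ := h ((2 : ℤ) • Pi.single k 1)
      (by intro i; rw [Matrix.mulVec_smul]; simp) (by rw [dotProduct_smul]; simp)
    refine ⟨m, ?_⟩
    rw [← hm, PiLp.inner_apply, Z_even, Finset.sum_eq_single k]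
    · simp [hvec]
      try ring
    · intro j _ hj
      simp [hvec, hj]
    · simp
  choose m hm using h1
  have hx : Half x m := hm
  have h2 : ∀ u, Ev u → Even (1 ⬝ᵥ u) → (2 : ℤ) ∣ m ⬝ᵥ u := by
    intro u hu hs
    obtain ⟨c, hc⟩ := (hx.int_iff (half_vec _)).1 (h u hu hs)
    rw [Z_even, dotProduct_smul, smul_eq_mul] at hc
    exact ⟨c, by omega⟩
  have h3 : ∀ k, ∃ c, m k = ∑ i, (m ⬝ᵥ Q i) * G i k + m ⬝ᵥ qb + 2 * c := by
    intro k
    let hh : Fin 44 → ℤ := Pi.single k 1 - ∑ i, G i k • Q i - qb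
    have e1 : m ⬝ᵥ hh = m k - ∑ i, (m ⬝ᵥ Q i) * G i k - m ⬝ᵥ qb := by
      simp only [hh, dotProduct_sub, dotProduct_sum, dotProduct_smul, dotProduct_single_one,
        smul_eq_mul]
      congr 2
      exact Finset.sum_congr rfl fun i _ => mul_comm _ _
    have e2 : Ev hh := by
      intro j
      have e3 : (G *ᵥ hh) j = G j k - ∑ i, G i k * (G j ⬝ᵥ Q i) - G j ⬝ᵥ qb := by
        change G j ⬝ᵥ hh = _
        simp only [hh, dotProduct_sub, dotProduct_sum, dotProduct_smul, dotProduct_single_one,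
          smul_eq_mul]
      have e4 : (2 : ℤ) ∣ ∑ i, G i k * (G j ⬝ᵥ Q i) - G j k := by
        have : G j k = ∑ i, G i k * (if j = i then 1 else 0) := by simp
        rw [this, ← Finset.sum_sub_distrib]
        apply Finset.dvd_sum
        intro i _
        rw [← mul_sub]
        exact Dvd.dvd.mul_left (Int.dvd_of_emod_eq_zero (G_Q j i)) _
      have e5 : (G j ⬝ᵥ qb) % 2 = 0 := G_qb j
      rw [e3, Int.even_iff]
      omega
    have e3 : Even (1 ⬝ᵥ hh) := by
      have e3 : 1 ⬝ᵥ hh = 1 - ∑ i, G i k * (1 ⬝ᵥ Q i) - 1 ⬝ᵥ qb := by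
        simp only [hh, dotProduct_sub, dotProduct_sum, dotProduct_smul, dotProduct_single_one,
          smul_eq_mul, Pi.one_apply]
      have e4 : (2 : ℤ) ∣ ∑ i, G i k * (1 ⬝ᵥ Q i) := by
        apply Finset.dvd_sum
        intro i _
        apply Dvd.dvd.mul_left
        apply Int.dvd_of_emod_eq_zero
        rw [one_dotProduct]
        exact one_Q i
      have e5 : (1 ⬝ᵥ qb) % 2 = 1 := by
        rw [one_dotProduct]; exact one_qb
      rw [e3, Int.even_iff]
      omega
    obtain ⟨c, hc⟩ := h2 hh e2 e3
    exact ⟨c, by linarith⟩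
  choose u hu using h3
  refine ⟨fun i => m ⬝ᵥ Q i, m ⬝ᵥ qb, u, fun k => ?_⟩
  rw [hm k, hu k, Z]

lemma Z_single (i : Fin 10) : Z (Pi.single i 1) 0 0 = G i := by
  rw [Z_eq]; simp; rfl

lemma Z_one : Z 0 1 0 = 1 := by
  rw [Z_eq]; simp

lemma ev_of_int {x : EuclideanSpace ℝ (Fin 44)} {a b u} (hx : Half x (Z a b u))
    (h : ∀ i, ∃ m : ℤ, ⟪x, hvec (Z (Pi.single i 1) 0 0)⟫ = (m : ℝ)) : Ev u := by
  intro i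
  obtain ⟨c, hc⟩ := (hx.int_iff (half_vec _)).1 (h i)
  have h3 := congrFun (G_Z a b u) i
  rw [Z_single, dotProduct_comm] at hc
  change G i ⬝ᵥ Z a b u = _ at h3
  simp only [Pi.add_apply, Pi.smul_apply, smul_eq_mul] at h3
  rw [hc] at h3
  have : 4 * b * tt i = 4 * (b * tt i) := by ring
  rw [Int.even_iff]
  omega

lemma even_of_int {x : EuclideanSpace ℝ (Fin 44)} {a b u} (hx : Half x (Z a b u))
    (h : ∃ m : ℤ, ⟪x, hvec (Z 0 1 0)⟫ = (m : ℝ)) : Even (1 ⬝ᵥ u) := by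
  obtain ⟨c, hc⟩ := (hx.int_iff (half_vec _)).1 h
  rw [Z_one, dotProduct_comm, one_Z] at hc
  rw [Int.even_iff]
  omega

lemma Lat_int {x y : EuclideanSpace ℝ (Fin 44)} (hx : x ∈ LL) (hy : y ∈ LL) :
    ∃ m : ℤ, ⟪x, y⟫ = (m : ℝ) := by
  obtain ⟨a, b, u, hu, hs, hz⟩ := hx
  obtain ⟨a', b', u', hu', hs', hz'⟩ := hy
  exact (hz.int_iff hz').2 (Z_Z a a' b b' u u' hu hu' hs hs')

lemma Lat_unimodular : IsUnimodularLattice LL := by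
  apply Set.Subset.antisymm
  · intro x hx y hy
    exact Lat_int hx hy
  · intro x hx
    obtain ⟨a, b, u, hz⟩ := dual_rep x (fun u hu hs => hx _ (vec_mem hu hs))
    exact ⟨a, b, u, ev_of_int hz fun i => hx _ (vec_mem Ev_zero (by simp)),
      even_of_int hz (hx _ (vec_mem Ev_zero (by simp))), hz⟩

lemma Lat_odd : IsOddLattice LL := by
  refine ⟨hvec (Z 0 1 0), vec_mem Ev_zero (by simp), 11, by decide, ?_⟩
  have := (half_vec (Z 0 1 0)).inner (half_vec (Z 0 1 0))
  rw [Z_one] at this ⊢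
  have h1 : (1 : Fin 44 → ℤ) ⬝ᵥ 1 = 44 := by simp
  rw [h1] at this
  rw [normOf]
  push_cast at this ⊢
  linarith

lemma half_zero {x : EuclideanSpace ℝ (Fin 44)} {z : Fin 44 → ℤ} (h : Half x z) (hz : z = 0) :
    x = 0 := by
  ext k
  have := h k
  simp [hz] at this
  simpa using this

lemma Lat_min : HasMinNorm LL 4 := by
  constructor
  · let u : Fin 44 → ℤ := (2 : ℤ) • Pi.single 0 1
    have hu : Ev u := by intro i; simp only [u]; rw [Matrix.mulVec_smul]; simp
    have hs : Even (1 ⬝ᵥ u) := by simp only [u]; rw [dotProduct_smul]; simp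
    have hn : normOf (hvec (Z 0 0 u)) = 4 := by
      have := (half_vec (Z 0 0 u)).inner (half_vec (Z 0 0 u))
      have h1 : Z 0 0 u ⬝ᵥ Z 0 0 u = 16 := by
        rw [Z_even]
        simp only [u, smul_dotProduct, dotProduct_smul, dotProduct_single_one]
        simp
      rw [h1] at this
      rw [normOf]
      push_cast at this
      linarith
    refine ⟨_, vec_mem (a := 0) (b := 0) hu hs, ?_, hn⟩
    intro h0
    rw [h0] at hn
    simp [normOf] at hn
  · rintro s ⟨x, ⟨a, b, u, hu, hs, hz⟩, hne, rfl⟩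
    have h1 := min16 a b u hu (fun h => hne (half_zero hz h))
    have h2 := hz.inner hz
    have h3 : (16 : ℝ) ≤ ((Z a b u ⬝ᵥ Z a b u : ℤ) : ℝ) := by exact_mod_cast h1
    rw [normOf]
    linarith

lemma Ev_w5 : Ev w5 := fun i => Int.even_iff.2 (G_w5 i)

lemma Lat_shadow : HasShadowMinNorm LL 5 := by
  constructor
  · have hH := half_vec (Z 0 0 w5)
    refine ⟨hvec (Z 0 0 w5), ⟨?_, ?_⟩, ?_⟩
    · rintro y ⟨⟨a, b, u, hu, hs, hz⟩, n, hn⟩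
      rw [hH.int_iff hz]
      obtain ⟨c, hc⟩ := norm_Z a b u hu
      have hb : Even b := by
        have h1 := hz.inner hz
        rw [normOf] at hn
        rw [hn] at h1
        have h2 : 4 * (2 * n) = Z a b u ⬝ᵥ Z a b u := by exact_mod_cast h1
        obtain ⟨s, hs⟩ := hs
        rw [hc, hs] at h2
        have : b * (s + s) = 2 * (b * s) := by ring
        rw [Int.even_iff]
        omega
      obtain ⟨d, hd⟩ := hb
      obtain ⟨e, he⟩ := Ev_w5.exists
      refine ⟨a ⬝ᵥ e + 5 * d + u ⬝ᵥ w5, ?_⟩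
      have h5 : 1 ⬝ᵥ w5 = 5 := by rw [one_dotProduct]; exact w5_sum
      rw [Z_even, smul_dotProduct, dotProduct_comm, Z_dot, he, h5, dotProduct_smul, hd]
      simp only [smul_eq_mul]
      ring
    · intro hmem
      have h1 := Lat_int hmem (vec_mem (a := 0) (b := 1) Ev_zero (by simp))
      have h2 := even_of_int hH h1
      rw [one_dotProduct, w5_sum] at h2
      exact absurd h2 (by decide)
    · have := hH.inner hH
      have h1 : Z 0 0 w5 ⬝ᵥ Z 0 0 w5 = 20 := by
        have h2 : w5 ⬝ᵥ w5 = 5 := w5_sq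
        rw [Z_even]
        simp only [smul_dotProduct, dotProduct_smul, h2]
        simp
      rw [h1] at this
      rw [normOf]
      push_cast at this
      linarith
  · rintro s ⟨y, ⟨hy, hnot⟩, rfl⟩
    obtain ⟨a, b, u, hz⟩ := dual_rep y
      (fun u hu hs => hy _ (vec_even_mem hu hs (by simp)))
    have hu : Ev u := ev_of_int hz fun i => hy _ (vec_even_mem Ev_zero (by simp) (by simp))
    have hs : ¬ Even (1 ⬝ᵥ u) := fun hs => hnot ⟨a, b, u, hu, hs, hz⟩
    rw [Int.not_even_iff_odd] at hs
    obtain ⟨c, hc⟩ := norm_Z a b u hu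
    obtain ⟨s, hs⟩ := hs
    have hmod : Z a b u ⬝ᵥ Z a b u = 8 * (c + b + b * s + s) + 4 := by
      rw [hc, hs]; ring
    have hne : Z a b u ≠ 0 := by
      intro h0
      rw [h0, zero_dotProduct] at hmod
      omega
    have h1 := min16 a b u hu hne
    have h2 : 20 ≤ Z a b u ⬝ᵥ Z a b u := by omega
    have h3 := hz.inner hz
    have h4 : (20 : ℝ) ≤ ((Z a b u ⬝ᵥ Z a b u : ℤ) : ℝ) := by exact_mod_cast h2
    rw [normOf]
    linarith

theorem exists_unimodular_dim44_min4_sigma20 :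
    ∃ L : Set (EuclideanSpace ℝ (Fin 44)),
      IsUnimodularLattice L ∧ IsOddLattice L ∧ HasMinNorm L 4 ∧ HasSigma L 20 := by
  exact ⟨LL, Lat_unimodular, Lat_odd, Lat_min, 5, Lat_shadow, by norm_num⟩
end
end
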